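/- arXiv:1306.5446 — 2 statements merged into one kernel-verified Lean document; each statement's English description precedes it below -/
import Mathlib

section
/- Let d ∈ ℕ and let O be either ℝᵈ or an open ball in ℝᵈ. Let m : ℝᵈ → [0,∞) be a measurable function such that m ∈ W^{1,1}_loc(ℝᵈ) and √m ∈ W^{1,2}(O). Then the weighted Sobolev space W^{1,2}(O, m(x)dx) coincides with the closure H^{1,2}(O, m(x)dx) of smooth functions: for every f ∈ W^{1,1}_loc(O) with ∫_O f(x)² m(x) dx < ∞ and ∫_O |Df(x)|² m(x) dx < ∞ there exists a sequence ψ_i ∈ C^∞(O) such that ∫_O (f(x) − ψ_i(x))² m(x) dx + ∫_O |Df(x) − Dψ_i(x)|² m(x) dx → 0 as i → ∞. -/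
open MeasureTheory Filter Set Topology RealInnerProductSpace

variable {d : ℕ}

/-- `g` is the weak (Sobolev) gradient of `f` on `ℝᵈ`; in particular `f ∈ W^{1,1}_loc`. -/
def HasWeakGrad (f : EuclideanSpace ℝ (Fin d) → ℝ)
    (g : EuclideanSpace ℝ (Fin d) → EuclideanSpace ℝ (Fin d)) : Prop :=
  LocallyIntegrable f volume ∧ LocallyIntegrable g volume ∧
    ∀ p : EuclideanSpace ℝ (Fin d) → ℝ, ContDiff ℝ (⊤ : ℕ∞) p → HasCompactSupport p →
      ∀ v : EuclideanSpace ℝ (Fin d),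
        (∫ x, f x * fderiv ℝ p x v) = - ∫ x, ⟪g x, v⟫ * p x

/-- `g` is the weak (Sobolev) gradient of `f` on the open set `O ⊆ ℝᵈ`. -/
def HasWeakGradOn (O : Set (EuclideanSpace ℝ (Fin d)))
    (f : EuclideanSpace ℝ (Fin d) → ℝ)
    (g : EuclideanSpace ℝ (Fin d) → EuclideanSpace ℝ (Fin d)) : Prop :=
  LocallyIntegrableOn f O volume ∧ LocallyIntegrableOn g O volume ∧
    ∀ p : EuclideanSpace ℝ (Fin d) → ℝ, ContDiff ℝ (⊤ : ℕ∞) p → HasCompactSupport p →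
      tsupport p ⊆ O →
      ∀ v : EuclideanSpace ℝ (Fin d),
        (∫ x in O, f x * fderiv ℝ p x v) = - ∫ x in O, ⟪g x, v⟫ * p x

/-!
Write `w = √m`, so that the weighted norm of `f` is the `L²` norm of the pair `(w f, w ∇f)`. For
bounded `f` of compact support the mollifications `ρₙ ⋆ f` are bounded in this norm: the commutator

`w(x) (∇ρₙ ⋆ f)(x) - (∇ρₙ ⋆ (w f))(x) = ∫ (w(x) - w(x - z)) f(x - z) ∇ρₙ(z) dz`

is controlled by `‖∇w‖₂ ‖f‖_∞ ∫ |z| |∇ρₙ(z)| dz`, which does not depend on `n`, while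
`∇ρₙ ⋆ (w f) = ρₙ ⋆ (f ∇w + w ∇f)`. Being bounded in `L²` and convergent almost everywhere, the
pairs of `ρₙ ⋆ f` converge weakly to that of `f`, which therefore lies in the closed subspace
spanned by smooth functions. The same weak limit along the smooth truncations `n sin (f / n)`
removes the boundedness of `f`, and a locally finite partition of unity, as in the theorem of Meyers
and Serrin, the compactness of the support.
-/

section LebesgueSpaces

variable {α β F G : Type*} [MeasurableSpace α] [MeasurableSpace β] [NormedAddCommGroup F]
  [NormedAddCommGroup G] {μ : Measure α} {ν : Measure β}

theorem lintegral_rpow_le_measure_univ_rpow_mul {p : ℝ} (hp : 1 ≤ p) {h : β → ENNReal}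
    (hh : AEMeasurable h ν) :
    (∫⁻ y, h y ∂ν) ^ p ≤ ν univ ^ (p - 1) * ∫⁻ y, h y ^ p ∂ν := by
  have hp0 : 0 < p := zero_lt_one.trans_le hp
  obtain rfl | hp1 := hp.eq_or_lt
  · simp
  have hpq : p.HolderConjugate (p.conjExponent) := Real.HolderConjugate.conjExponent hp1
  have holder := ENNReal.lintegral_mul_le_Lp_mul_Lq ν hpq hh (aemeasurable_const (b := 1))
  simp only [Pi.mul_apply, mul_one, ENNReal.one_rpow, lintegral_one] at holder
  calc (∫⁻ y, h y ∂ν) ^ p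
      ≤ ((∫⁻ y, h y ^ p ∂ν) ^ (1 / p) * ν univ ^ (1 / p.conjExponent)) ^ p := by gcongr
    _ = ν univ ^ (p - 1) * ∫⁻ y, h y ^ p ∂ν := by
      rw [ENNReal.mul_rpow_of_nonneg _ _ hp0.le, ← ENNReal.rpow_mul, ← ENNReal.rpow_mul,
        one_div_mul_cancel hp0.ne', ENNReal.rpow_one, mul_comm, Real.conjExponent]
      congr 2
      field_simp

theorem lintegral_mul_rpow_le {p : ℝ} (hp : 1 ≤ p) {κ h : β → ENNReal}
    (hκ : AEMeasurable κ ν) (hh : AEMeasurable h ν) :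
    (∫⁻ y, κ y * h y ∂ν) ^ p ≤ (∫⁻ y, κ y ∂ν) ^ (p - 1) * ∫⁻ y, κ y * h y ^ p ∂ν := by
  have hh' : AEMeasurable h (ν.withDensity κ) := hh.mono_ac (withDensity_absolutelyContinuous ν κ)
  simpa [lintegral_withDensity_eq_lintegral_mul₀ hκ hh,
    lintegral_withDensity_eq_lintegral_mul₀ hκ (hh.pow_const p), withDensity_apply]
    using lintegral_rpow_le_measure_univ_rpow_mul hp hh'

theorem eLpNorm_integral_le_lintegral_mul [SFinite μ] [SFinite ν] [NormedSpace ℝ F] {p : ENNReal}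
    (hp : 1 ≤ p) (hp' : p ≠ ⊤) {f : α → β → F} {κ : β → ENNReal} {h : α → β → G}
    (hκ : AEMeasurable κ ν) (hh : AEStronglyMeasurable (Function.uncurry h) (μ.prod ν))
    (hf : ∀ x y, ‖f x y‖ₑ ≤ κ y * ‖h x y‖ₑ) {C : ENNReal}
    (hC : ∀ y, κ y ≠ 0 → eLpNorm (fun x => h x y) p μ ≤ C) :
    eLpNorm (fun x => ∫ y, f x y ∂ν) p μ ≤ (∫⁻ y, κ y ∂ν) * C := by
  lift p to NNReal using hp'
  have hr : 1 ≤ (p : ℝ) := mod_cast hp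
  have hr0 : 0 < (p : ℝ) := zero_lt_one.trans_le hr
  have hp0 : p ≠ 0 := mod_cast hr0.ne'
  have hprod : AEMeasurable (fun z : α × β => κ z.2 * ‖h z.1 z.2‖ₑ ^ (p : ℝ)) (μ.prod ν) :=
    hκ.comp_snd.mul (hh.enorm.pow_const _)
  rw [← ENNReal.rpow_le_rpow_iff hr0]
  calc eLpNorm (fun x => ∫ y, f x y ∂ν) p μ ^ (p : ℝ)
      = ∫⁻ x, ‖∫ y, f x y ∂ν‖ₑ ^ (p : ℝ) ∂μ := eLpNorm_nnreal_pow_eq_lintegral hp0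
    _ ≤ ∫⁻ x, (∫⁻ y, κ y ∂ν) ^ ((p : ℝ) - 1) *
          ∫⁻ y, κ y * ‖h x y‖ₑ ^ (p : ℝ) ∂ν ∂μ := by
        refine lintegral_mono_ae (hh.prodMk_left.mono fun x hx => ?_)
        refine le_trans ?_ (lintegral_mul_rpow_le hr hκ hx.enorm)
        gcongr
        exact (enorm_integral_le_lintegral_enorm _).trans (lintegral_mono (hf x))
    _ = (∫⁻ y, κ y ∂ν) ^ ((p : ℝ) - 1) *
          ∫⁻ y, κ y * eLpNorm (fun x => h x y) p μ ^ (p : ℝ) ∂ν := by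
        rw [lintegral_const_mul'' _ hprod.lintegral_prod_right', lintegral_lintegral_swap hprod]
        congr 1
        refine lintegral_congr_ae (hh.prod_swap.prodMk_left.mono fun y hy => ?_)
        dsimp only
        rw [eLpNorm_nnreal_pow_eq_lintegral hp0]
        exact lintegral_const_mul'' _ (hy.enorm.pow_const _)
    _ ≤ (∫⁻ y, κ y ∂ν) ^ ((p : ℝ) - 1) * ((∫⁻ y, κ y ∂ν) * C ^ (p : ℝ)) := by
        rw [← lintegral_mul_const'' _ hκ]
        refine mul_le_mul_right (lintegral_mono fun y => ?_) _
        obtain hy | hy := eq_or_ne (κ y) 0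
        · simp [hy]
        · dsimp only; gcongr
          exact hC y hy
    _ = ((∫⁻ y, κ y ∂ν) * C) ^ (p : ℝ) := by
        rw [ENNReal.mul_rpow_of_nonneg _ _ hr0.le, ← mul_assoc]
        congr 1
        nth_rw 2 [← ENNReal.rpow_one (∫⁻ y, κ y ∂ν)]
        rw [← ENNReal.rpow_add_of_nonneg _ _ (by linarith) zero_le_one, sub_add_cancel]

theorem tendsto_eLpNorm_one_sub_of_ae_tendsto {f : α → F} {u : ℕ → α → F}
    (hu : ∀ n, AEStronglyMeasurable (u n) μ) (hf : Integrable f μ)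
    (hle : ∀ n, eLpNorm (u n) 1 μ ≤ eLpNorm f 1 μ)
    (hlim : ∀ᵐ x ∂μ, Tendsto (fun n => u n x) atTop (𝓝 (f x))) :
    Tendsto (fun n => eLpNorm (u n - f) 1 μ) atTop (𝓝 0) := by
  set M := 2 * eLpNorm f 1 μ
  set a : ℕ → α → ENNReal := fun n x => ‖u n x‖ₑ + ‖f x‖ₑ - ‖u n x - f x‖ₑ
  have hM : M ≠ ⊤ := ENNReal.mul_ne_top (by simp) (memLp_one_iff_integrable.2 hf).eLpNorm_ne_top
  have ha : ∀ n, AEMeasurable (a n) μ := fun n =>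
    ((hu n).enorm.add hf.1.enorm).sub ((hu n).sub hf.1).enorm
  have hsum : ∀ n, ∫⁻ x, a n x ∂μ + eLpNorm (u n - f) 1 μ ≤ M := fun n =>
    calc ∫⁻ x, a n x ∂μ + eLpNorm (u n - f) 1 μ
        = eLpNorm (u n) 1 μ + eLpNorm f 1 μ := by
          simp only [eLpNorm_one_eq_lintegral_enorm]
          rw [← lintegral_add_left' (ha n), ← lintegral_add_left' (hu n).enorm]
          exact lintegral_congr fun x => tsub_add_cancel_of_le (enorm_sub_le)
      _ ≤ M := (add_le_add_left (hle n) _).trans_eq (two_mul _).symm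
  have hfatou : M ≤ liminf (fun n => ∫⁻ x, a n x ∂μ) atTop :=
    calc M = ∫⁻ x, liminf (fun n => a n x) atTop ∂μ := by
          rw [show M = 2 * ∫⁻ x, ‖f x‖ₑ ∂μ by rw [← eLpNorm_one_eq_lintegral_enorm]]
          rw [← lintegral_const_mul'' (2 : ENNReal) hf.1.enorm]
          refine lintegral_congr_ae (hlim.mono fun x hx => Eq.symm (Tendsto.liminf_eq ?_))
          simpa [two_mul] using ENNReal.Tendsto.sub (hx.enorm.add_const ‖f x‖ₑ)
            (hx.sub_const (f x)).enorm (Or.inr (by simp))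
      _ ≤ _ := lintegral_liminf_le' ha
  have hlimsup : Tendsto (fun n => ∫⁻ x, a n x ∂μ) atTop (𝓝 M) :=
    tendsto_of_le_liminf_of_limsup_le hfatou
      (limsup_le_of_le (h := .of_forall fun n => le_self_add.trans (hsum n)))
  refine tendsto_of_tendsto_of_tendsto_of_le_of_le tendsto_const_nhds
    (by simpa using ENNReal.Tendsto.sub tendsto_const_nhds hlimsup (Or.inl hM))
    (fun _ => zero_le) fun n => ?_
  exact ENNReal.le_sub_of_add_le_left
    (ne_top_of_le_ne_top hM (le_self_add.trans (hsum n))) (hsum n)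

theorem tendsto_integral_smul_of_bounded [NormedSpace ℝ F] {b : ℕ → α → ℝ} {b₀ : α → ℝ}
    {g : ℕ → α → F} {g₀ : α → F} {C : ℝ} (hb : ∀ n, AEStronglyMeasurable (b n) μ)
    (hbC : ∀ n x, |b n x| ≤ C) (hblim : ∀ᵐ x ∂μ, Tendsto (fun n => b n x) atTop (𝓝 (b₀ x)))
    (hg : ∀ n, Integrable (g n) μ) (hg₀ : Integrable g₀ μ)
    (hglim : Tendsto (fun n => eLpNorm (g n - g₀) 1 μ) atTop (𝓝 0)) :
    Tendsto (fun n => ∫ x, b n x • g n x ∂μ) atTop (𝓝 (∫ x, b₀ x • g₀ x ∂μ)) := by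
  have hconst : Tendsto (fun n => ∫ x, b n x • g₀ x ∂μ) atTop (𝓝 (∫ x, b₀ x • g₀ x ∂μ)) := by
    refine tendsto_integral_of_dominated_convergence (fun x => C * ‖g₀ x‖)
      (fun n => (hb n).smul hg₀.1) (hg₀.norm.const_mul C) (fun n => .of_forall fun x => ?_)
      (hblim.mono fun x hx => hx.smul_const _)
    rw [norm_smul]
    gcongr
    exact hbC n x
  have hdiff : Tendsto (fun n => ∫ x, b n x • (g n x - g₀ x) ∂μ) atTop (𝓝 0) := by
    rw [tendsto_zero_iff_enorm_tendsto_zero]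
    refine tendsto_of_tendsto_of_tendsto_of_le_of_le tendsto_const_nhds
      (by simpa using ENNReal.Tendsto.const_mul (a := ENNReal.ofReal C) hglim (by simp))
      (fun _ => zero_le) fun n => (enorm_integral_le_lintegral_enorm _).trans ?_
    rw [eLpNorm_one_eq_lintegral_enorm,
      ← lintegral_const_mul'' _ ((hg n).1.sub hg₀.1).enorm]
    refine lintegral_mono fun x => ?_
    rw [enorm_smul]
    gcongr
    · rw [Real.enorm_eq_ofReal_abs]
      exact ENNReal.ofReal_le_ofReal (hbC n x)
    · rfl
  have hbg : ∀ n, ∀ h : α → F, Integrable h μ → Integrable (fun x => b n x • h x) μ := fun n h hh =>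
    hh.bdd_smul C (hb n) (.of_forall (hbC n))
  simpa [smul_sub, integral_sub (hbg _ _ (hg _)) (hbg _ _ hg₀)] using hdiff.add hconst

end LebesgueSpaces

section WeakConvergence

variable {α H : Type*} [MeasurableSpace α] {μ : Measure α} [NormedAddCommGroup H]
  [InnerProductSpace ℝ H]

theorem eLpNorm_indicator_inner_le {u h : α → H} (hu : AEStronglyMeasurable u μ)
    (hh : AEStronglyMeasurable h μ) {C : ℝ} (hC : eLpNorm u 2 μ ≤ ENNReal.ofReal C) {s : Set α}
    (hs : MeasurableSet s) :
    eLpNorm (s.indicator fun x => ⟪u x, h x⟫) 1 μ ≤ eLpNorm (s.indicator (C • h)) 2 μ := by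
  have hind : (s.indicator fun x => ⟪u x, h x⟫) = fun x => ⟪u x, s.indicator h x⟫ := by
    ext x
    by_cases hx : x ∈ s <;> simp [hx]
  have hholder := eLpNorm_le_eLpNorm_mul_eLpNorm'_of_norm (p := 2) (q := 2) (r := 1) hu
    (hh.indicator hs)
    (fun v w => ⟪v, w⟫) 1 (.of_forall fun x => by
      simpa using norm_inner_le_norm (𝕜 := ℝ) (u x) (s.indicator h x))
  have hsmul : s.indicator (C • h) = C • s.indicator h := indicator_const_smul s C h
  rw [hind, hsmul, eLpNorm_const_smul]
  refine hholder.trans ?_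
  rw [ENNReal.coe_one, one_mul]
  gcongr
  exact hC.trans ((ENNReal.ofReal_le_ofReal (le_abs_self C)).trans_eq
    (Real.enorm_eq_ofReal_abs C).symm)

theorem integrable_inner {v h : α → H} (hv : MemLp v 2 μ) (hh : MemLp h 2 μ) :
    Integrable (fun x => ⟪v x, h x⟫) μ :=
  (hv.norm.integrable_mul hh.norm).mono' (hv.1.inner hh.1)
    (.of_forall fun x => norm_inner_le_norm (𝕜 := ℝ) (v x) (h x))

theorem tendsto_integral_inner_of_ae_tendsto {u : ℕ → α → H} {v h : α → H}
    (hu : ∀ n, MemLp (u n) 2 μ) (hv : MemLp v 2 μ) (hh : MemLp h 2 μ) {C : ℝ}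
    (hC : ∀ n, eLpNorm (u n) 2 μ ≤ ENNReal.ofReal C)
    (hlim : ∀ᵐ x ∂μ, Tendsto (fun n => u n x) atTop (𝓝 (v x))) :
    Tendsto (fun n => ∫ x, ⟪u n x, h x⟫ ∂μ) atTop (𝓝 (∫ x, ⟪v x, h x⟫ ∂μ)) := by
  have hCh : MemLp (C • h) 2 μ := hh.const_smul C
  have hindicator : ∀ n {s : Set α}, MeasurableSet s →
      eLpNorm (s.indicator fun x => ⟪u n x, h x⟫) 1 μ ≤ eLpNorm (s.indicator (C • h)) 2 μ :=
    fun n _ hs => eLpNorm_indicator_inner_le (hu n).1 hh.1 (hC n) hs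
  have hunif : UnifIntegrable (fun n x => ⟪u n x, h x⟫) 1 μ := fun ε hε => by
    obtain ⟨δ, hδ, hle⟩ := hCh.eLpNorm_indicator_le one_le_two ENNReal.ofNat_ne_top hε
    exact ⟨δ, hδ, fun n s hs hμs => (hindicator n hs).trans (hle s hs hμs)⟩
  have htight : UnifTight (fun n x => ⟪u n x, h x⟫) 1 μ := fun ε hε => by
    obtain ⟨s, hs, hμs, hle⟩ := hCh.exists_eLpNorm_indicator_compl_lt ENNReal.ofNat_ne_top
      (ENNReal.coe_ne_zero.2 hε.ne')
    exact ⟨s, hμs.ne, fun n => (hindicator n hs.compl).trans hle.le⟩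
  exact tendsto_integral_of_L1' _ (integrable_inner hv hh).1
    (.of_forall fun n => integrable_inner (hu n) hh)
    (tendsto_Lp_of_tendsto_ae le_rfl ENNReal.one_ne_top (fun n => (hu n).1.inner hh.1)
      (memLp_one_iff_integrable.2 (integrable_inner hv hh)) hunif htight
      (hlim.mono fun x hx => hx.inner tendsto_const_nhds))

theorem toLp_mem_of_eLpNorm_le_of_ae_tendsto [CompleteSpace H] {K : Submodule ℝ (Lp H 2 μ)}
    (hK : IsClosed (K : Set (Lp H 2 μ))) {u : ℕ → α → H} {v : α → H}
    (hu : ∀ n, MemLp (u n) 2 μ) (hv : MemLp v 2 μ) (huK : ∀ᶠ n in atTop, (hu n).toLp ∈ K)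
    {C : ENNReal} (hC : C ≠ ⊤) (huC : ∀ n, eLpNorm (u n) 2 μ ≤ C)
    (hlim : ∀ᵐ x ∂μ, Tendsto (fun n => u n x) atTop (𝓝 (v x))) : hv.toLp ∈ K := by
  have : CompleteSpace K := hK.completeSpace_coe
  rw [← K.orthogonal_orthogonal, K.orthogonal.mem_orthogonal']
  intro h hh
  have hinner : ∀ {z : α → H} (hz : MemLp z 2 μ), ⟪hz.toLp, h⟫ = ∫ x, ⟪z x, h x⟫ ∂μ :=
    fun hz => integral_congr_ae (hz.coeFn_toLp.mono fun x hx => by simp only [hx])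
  have htendsto : Tendsto (fun n => ⟪(hu n).toLp, h⟫) atTop (𝓝 ⟪hv.toLp, h⟫) := by
    simp only [hinner]
    exact tendsto_integral_inner_of_ae_tendsto hu hv (Lp.memLp h) (C := C.toReal)
      (fun n => (huC n).trans (ENNReal.ofReal_toReal hC).ge) hlim
  exact tendsto_nhds_unique htendsto (tendsto_const_nhds.congr' (huK.mono fun n hn =>
    (K.inner_right_of_mem_orthogonal hn hh).symm))

end WeakConvergence

theorem eLpNorm_sub_comp_sub_le_of_contDiff {E : Type*} [NormedAddCommGroup E] [NormedSpace ℝ E]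
    [FiniteDimensional ℝ E] [MeasurableSpace E] [BorelSpace E] {μ : Measure E} [μ.IsAddHaarMeasure]
    {w : E → ℝ} (hw : ContDiff ℝ 1 w) (z : E) {p : ENNReal} (hp : 1 ≤ p) (hp' : p ≠ ⊤) :
    eLpNorm (fun x => w x - w (x - z)) p μ ≤ ‖z‖ₑ * eLpNorm (fderiv ℝ w) p μ := by
  have hfderiv : Continuous (fderiv ℝ w) := hw.continuous_fderiv one_ne_zero
  have hftc : ∀ x, w x - w (x - z) = ∫ t in Ioc (0 : ℝ) 1, fderiv ℝ w (x - t • z) z := fun x => by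
    have hderiv : ∀ t : ℝ, HasDerivAt (fun t : ℝ => -w (x - t • z)) (fderiv ℝ w (x - t • z) z) t :=
      fun t => by
        have hline : HasDerivAt (fun t : ℝ => x - t • z) (-z) t := by
          simpa using ((hasDerivAt_id t).smul_const z).const_sub x
        have hcomp := ((hw.differentiable one_ne_zero _).hasFDerivAt.comp_hasDerivAt t hline).neg
        rwa [map_neg, neg_neg] at hcomp
    have hcont : Continuous fun t : ℝ => fderiv ℝ w (x - t • z) z := by fun_prop
    rw [← intervalIntegral.integral_of_le zero_le_one,
      intervalIntegral.integral_eq_sub_of_hasDerivAt (fun t _ => hderiv t)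
        (hcont.intervalIntegrable 0 1), one_smul, zero_smul, sub_zero, neg_sub_neg]
  have hbound := eLpNorm_integral_le_lintegral_mul (μ := μ) (ν := volume.restrict (Ioc (0 : ℝ) 1))
    hp hp' (f := fun x t => fderiv ℝ w (x - t • z) z) (κ := fun _ => ‖z‖ₑ)
    (h := fun x t => fderiv ℝ w (x - t • z)) (C := eLpNorm (fderiv ℝ w) p μ) aemeasurable_const
    (Continuous.aestronglyMeasurable (by simp only [Function.uncurry_def]; fun_prop))
    (fun x t => (ContinuousLinearMap.le_opENorm _ _).trans_eq (mul_comm _ _))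
    fun t _ => (eLpNorm_comp_measurePreserving hfderiv.aestronglyMeasurable
      (measurePreserving_sub_right μ (t • z))).le
  simpa [hftc] using hbound

section Mollification

open scoped Convolution ContDiff

variable {E F : Type*} [NormedAddCommGroup E] [NormedAddCommGroup F] [NormedSpace ℝ F]

/-- The standard mollifying sequence: bump functions centred at the origin, supported in the ball
of radius `2 / (n + 1)`. The ratio of the radii is constant, so that all the bumps are rescalings
of the first one. -/
noncomputable def stdBump (E : Type*) [NormedAddCommGroup E] (n : ℕ) : ContDiffBump (0 : E) where
  rIn := (n + 1 : ℝ)⁻¹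
  rOut := 2 * (n + 1 : ℝ)⁻¹
  rIn_pos := by positivity
  rIn_lt_rOut := lt_mul_of_one_lt_left (by positivity) one_lt_two

theorem tendsto_stdBump_rOut : Tendsto (fun n => (stdBump E n).rOut) atTop (𝓝 0) := by
  simpa [stdBump] using (tendsto_one_div_add_atTop_nhds_zero_nat (𝕜 := ℝ)).const_mul 2

variable [NormedSpace ℝ E] [HasContDiffBump E] [MeasurableSpace E] {μ : Measure E}

/-- The standard mollification of `f`: its convolution with the normalised `n`-th bump. -/
noncomputable def mollify (μ : Measure E) (n : ℕ) (f : E → F) : E → F :=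
  (stdBump E n).normed μ ⋆[ContinuousLinearMap.lsmul ℝ ℝ, μ] f

theorem mollify_apply (n : ℕ) (f : E → F) (x : E) :
    mollify μ n f x = ∫ z, (stdBump E n).normed μ z • f (x - z) ∂μ := rfl

variable [BorelSpace E] [FiniteDimensional ℝ E] [μ.IsAddHaarMeasure]

theorem contDiff_mollify (n : ℕ) {f : E → F} (hf : LocallyIntegrable f μ) :
    ContDiff ℝ ∞ (mollify μ n f) :=
  (stdBump E n).hasCompactSupport_normed.contDiff_convolution_left _
    (stdBump E n).contDiff_normed hf

theorem norm_mollify_le (n : ℕ) {f : E → F} {C : ℝ} (hC : ∀ x, ‖f x‖ ≤ C) (x : E) :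
    ‖mollify μ n f x‖ ≤ C := by
  rw [mollify_apply]
  calc ‖∫ z, (stdBump E n).normed μ z • f (x - z) ∂μ‖ ≤ ∫ z, (stdBump E n).normed μ z * C ∂μ :=
        norm_integral_le_of_norm_le ((stdBump E n).integrable_normed.mul_const C)
          (.of_forall fun z => by
            rw [norm_smul, Real.norm_of_nonneg ((stdBump E n).nonneg_normed z)]
            exact mul_le_mul_of_nonneg_left (hC _) ((stdBump E n).nonneg_normed z))
    _ = C := by rw [integral_mul_const, (stdBump E n).integral_normed, one_mul]

theorem ae_tendsto_mollify [CompleteSpace F] {f : E → F} (hf : LocallyIntegrable f μ) :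
    ∀ᵐ x ∂μ, Tendsto (fun n => mollify μ n f x) atTop (𝓝 (f x)) :=
  ContDiffBump.ae_convolution_tendsto_right_of_locallyIntegrable tendsto_stdBump_rOut
    (K := 2) (.of_forall fun _ => le_rfl) hf

theorem tsupport_mollify_subset (n : ℕ) (f : E → F) :
    tsupport (mollify μ n f) ⊆ Metric.cthickening (stdBump E n).rOut (tsupport f) := by
  refine closure_minimal (fun x hx => ?_) Metric.isClosed_cthickening
  obtain ⟨z, hz, y, hy, rfl⟩ := support_convolution_subset _ hx
  rw [ContDiffBump.support_normed_eq, mem_ball_zero_iff] at hz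
  exact Metric.mem_cthickening_of_dist_le (z + y) y _ _ (subset_tsupport f hy)
    (by simpa using hz.le)

theorem eventually_tsupport_mollify_subset {f : E → F} (hf : HasCompactSupport f) {V : Set E}
    (hV : IsOpen V) (hfV : tsupport f ⊆ V) :
    ∀ᶠ n in atTop, tsupport (mollify μ n f) ⊆ V := by
  obtain ⟨δ, hδ, hsub⟩ := hf.isCompact.exists_cthickening_subset_open hV hfV
  filter_upwards [(tendsto_stdBump_rOut (E := E)).eventually_le_const hδ] with n hn
  exact (tsupport_mollify_subset n f).trans ((Metric.cthickening_mono hn _).trans hsub)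

theorem hasCompactSupport_mollify (n : ℕ) {f : E → F} (hf : HasCompactSupport f) :
    HasCompactSupport (mollify μ n f) :=
  (stdBump E n).hasCompactSupport_normed.convolution _ hf

theorem fderiv_mollify (n : ℕ) {f : E → ℝ} (hf : LocallyIntegrable f μ) (x : E) :
    fderiv ℝ (mollify μ n f) x =
      ∫ z, f (x - z) • fderiv ℝ ((stdBump E n).normed μ) z ∂μ :=
  ((stdBump E n).hasCompactSupport_normed.hasFDerivAt_convolution_left _
    (stdBump E n).contDiff_normed hf x).fderiv.trans <|
      integral_congr_ae (.of_forall fun z => by ext v; simp [mul_comm])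

theorem eLpNorm_mollify_le (n : ℕ) {f : E → F} (hf : AEStronglyMeasurable f μ) {p : ENNReal}
    (hp : 1 ≤ p) (hp' : p ≠ ⊤) :
    eLpNorm (mollify μ n f) p μ ≤ eLpNorm f p μ := by
  have hmass : ∫⁻ z, ‖(stdBump E n).normed μ z‖ₑ ∂μ = 1 := by
    rw [← ofReal_integral_norm_eq_lintegral_enorm (stdBump E n).integrable_normed]
    simp [Real.norm_of_nonneg ((stdBump E n).nonneg_normed _), (stdBump E n).integral_normed]
  rw [← one_mul (eLpNorm f p μ), ← hmass]
  exact eLpNorm_integral_le_lintegral_mul hp hp' (h := fun x z => f (x - z))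
    (stdBump E n).continuous_normed.measurable.enorm.aemeasurable
    (hf.comp_quasiMeasurePreserving (quasiMeasurePreserving_sub_of_right_invariant μ μ))
    (fun x z => (enorm_smul _ _).le)
    fun z _ => (eLpNorm_comp_measurePreserving hf (measurePreserving_sub_right μ z)).le

theorem integrable_mollify (n : ℕ) {f : E → F} (hf : Integrable f μ) :
    Integrable (mollify μ n f) μ :=
  memLp_one_iff_integrable.1
    ⟨(contDiff_mollify n hf.locallyIntegrable).continuous.aestronglyMeasurable,
      (eLpNorm_mollify_le n hf.1 le_rfl ENNReal.one_ne_top).trans_lt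
        (memLp_one_iff_integrable.2 hf).2⟩

theorem tendsto_eLpNorm_mollify_sub [CompleteSpace F] {f : E → F} (hf : Integrable f μ) :
    Tendsto (fun n => eLpNorm (mollify μ n f - f) 1 μ) atTop (𝓝 0) :=
  tendsto_eLpNorm_one_sub_of_ae_tendsto
    (fun n => (integrable_mollify n hf).1) hf
    (fun n => eLpNorm_mollify_le n hf.1 le_rfl ENNReal.one_ne_top)
    (ae_tendsto_mollify hf.locallyIntegrable)

theorem normed_stdBump_apply (n : ℕ) (x : E) :
    (stdBump E n).normed μ x =
      (n + 1 : ℝ) ^ Module.finrank ℝ E * (stdBump E 0).normed μ ((n + 1 : ℝ) • x) := by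
  have hscale : ∀ y, stdBump E n y = stdBump E 0 ((n + 1 : ℝ) • y) := fun y => by
    simp only [ContDiffBump.apply, stdBump]
    congr 1
    · field_simp
    · simp
  rw [ContDiffBump.normed_def, ContDiffBump.normed_def, hscale, integral_congr_ae
    (.of_forall hscale), Measure.integral_comp_smul_of_nonneg μ _ _ (hR := by positivity)]
  simp only [smul_eq_mul]
  field_simp

theorem integrable_fderiv_normed_stdBump (n : ℕ) :
    Integrable (fderiv ℝ ((stdBump E n).normed μ)) μ :=
  Continuous.integrable_of_hasCompactSupport
    ((stdBump E n).contDiff_normed.continuous_fderiv (n := 1) (by simp))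
    ((stdBump E n).hasCompactSupport_normed.fderiv ℝ)

theorem lintegral_enorm_fderiv_normed_stdBump (n : ℕ) :
    ∫⁻ z, ‖fderiv ℝ ((stdBump E n).normed μ) z‖ₑ ∂μ =
      ENNReal.ofReal (n + 1) * ∫⁻ z, ‖fderiv ℝ ((stdBump E 0).normed μ) z‖ₑ ∂μ := by
  have hfderiv : ∀ z, fderiv ℝ ((stdBump E n).normed μ) z = ((n + 1 : ℝ) ^ Module.finrank ℝ E *
      (n + 1 : ℝ)) • fderiv ℝ ((stdBump E 0).normed μ) ((n + 1 : ℝ) • z) := fun z => by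
    rw [funext (normed_stdBump_apply n), fderiv_const_mul, fderiv_comp_smul, smul_smul]
    exact ((stdBump E 0).contDiff_normed.differentiable (n := 1) (by simp) _).comp z
      (differentiableAt_id.const_smul _)
  rw [← ofReal_integral_norm_eq_lintegral_enorm (integrable_fderiv_normed_stdBump n),
    ← ofReal_integral_norm_eq_lintegral_enorm (integrable_fderiv_normed_stdBump 0),
    ← ENNReal.ofReal_mul (by positivity)]
  simp only [hfderiv, norm_smul]
  rw [integral_const_mul, Measure.integral_comp_smul_of_nonneg μ
    (fun z => ‖fderiv ℝ ((stdBump E 0).normed μ) z‖) _ (hR := by positivity), smul_eq_mul,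
    Real.norm_of_nonneg (by positivity)]
  field_simp

end Mollification

section WeakGradients

open scoped ContDiff

local notation "𝔼" => EuclideanSpace ℝ (Fin d)

section LocallyIntegrable

variable {X F : Type*} [TopologicalSpace X] [MeasurableSpace X]
  [NormedAddCommGroup F] {μ : Measure X} {f : X → F}

theorem locallyIntegrable_of_tsupport_subset [T2Space X] [OpensMeasurableSpace X]
    [LocallyCompactSpace X] {O : Set X} (hf : LocallyIntegrableOn f O μ) (hfO : tsupport f ⊆ O) :
    LocallyIntegrable f μ :=
  locallyIntegrable_iff.2 fun _ hK =>
    (hf.integrableOn_compact_subset (inter_subset_right.trans hfO)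
      (hK.inter_right (isClosed_tsupport f))).of_forall_sdiff_eq_zero hK.measurableSet
      fun _ hx => image_eq_zero_of_notMem_tsupport fun h => hx.2 ⟨hx.1, h⟩

theorem integrable_of_hasCompactSupport (hf : LocallyIntegrable f μ) (hfc : HasCompactSupport f) :
    Integrable f μ :=
  (integrableOn_iff_integrable_of_support_subset (subset_tsupport f)).1
    (hf.integrableOn_isCompact hfc)

end LocallyIntegrable

theorem continuous_gradient {ψ : 𝔼 → ℝ} (hψ : ContDiff ℝ 1 ψ) : Continuous (gradient ψ) :=
  (InnerProductSpace.toDual ℝ 𝔼).symm.continuous.comp (hψ.continuous_fderiv one_ne_zero)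

theorem enorm_gradient (ψ : 𝔼 → ℝ) (x : 𝔼) : ‖gradient ψ x‖ₑ = ‖fderiv ℝ ψ x‖ₑ := by
  rw [← toDual_gradient, ← ofReal_norm, ← ofReal_norm, LinearIsometryEquiv.norm_map]

theorem gradient_mul {φ ψ : 𝔼 → ℝ} {x : 𝔼} (hφ : DifferentiableAt ℝ φ x)
    (hψ : DifferentiableAt ℝ ψ x) :
    gradient (fun x => φ x * ψ x) x = φ x • gradient ψ x + ψ x • gradient φ x := by
  simp only [gradient, fderiv_fun_mul hφ hψ, map_add, map_smul]

theorem tsupport_gradient_subset (ψ : 𝔼 → ℝ) : tsupport (gradient ψ) ⊆ tsupport ψ :=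
  closure_minimal (fun x hx => tsupport_fderiv_subset ℝ (subset_tsupport _ fun h => hx (by
    rw [gradient, h, map_zero]))) (isClosed_tsupport ψ)

theorem hasCompactSupport_gradient {ψ : 𝔼 → ℝ} (hψ : HasCompactSupport ψ) :
    HasCompactSupport (gradient ψ) :=
  hψ.mono' (subset_closure.trans (tsupport_gradient_subset ψ))

theorem locallyIntegrable_smul_of_tsupport_subset {F : Type*} [NormedAddCommGroup F]
    [NormedSpace ℝ F] {O : Set 𝔼} (hO : IsOpen O) {f : 𝔼 → F} (hf : LocallyIntegrableOn f O)
    {η : 𝔼 → ℝ} (hη : Continuous η) (hηO : tsupport η ⊆ O) :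
    LocallyIntegrable fun x => η x • f x :=
  locallyIntegrable_of_tsupport_subset (hf.continuousOn_smul hO.isLocallyClosed hη.continuousOn)
    ((tsupport_smul_subset_left _ _).trans hηO)

theorem locallyIntegrable_smul_gradient {O : Set 𝔼} (hO : IsOpen O) {f : 𝔼 → ℝ}
    (hf : LocallyIntegrableOn f O) {η : 𝔼 → ℝ} (hη : ContDiff ℝ 1 η) (hηO : tsupport η ⊆ O) :
    LocallyIntegrable fun x => f x • gradient η x :=
  locallyIntegrable_of_tsupport_subset
    (hf.smul_continuousOn hO.isLocallyClosed (continuous_gradient hη).continuousOn)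
    ((tsupport_smul_subset_right _ _).trans ((tsupport_gradient_subset η).trans hηO))

theorem hasWeakGradOn_iff {O : Set 𝔼} (hO : IsOpen O) {f : 𝔼 → ℝ} {g : 𝔼 → 𝔼} :
    HasWeakGradOn O f g ↔ LocallyIntegrableOn f O ∧ LocallyIntegrableOn g O ∧
      ∀ p : 𝔼 → ℝ, ContDiff ℝ ∞ p → HasCompactSupport p → tsupport p ⊆ O →
        ∫ x, f x • gradient p x = -∫ x, p x • g x := by
  refine and_congr_right fun hf => and_congr_right fun hg => forall_congr' fun p =>
    forall₃_congr fun hp hpc hpO => ?_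
  have hfp : Integrable fun x => f x • gradient p x :=
    integrable_of_hasCompactSupport (locallyIntegrable_smul_gradient hO hf (hp.of_le (by simp)) hpO)
      ((hasCompactSupport_gradient hpc).smul_left (f := f))
  have hpg : Integrable fun x => p x • g x :=
    integrable_of_hasCompactSupport (locallyIntegrable_smul_of_tsupport_subset hO hg hp.continuous
      hpO) (hpc.smul_right (f' := g))
  have hleft : ∀ v, ∫ x in O, f x * fderiv ℝ p x v = ⟪∫ x, f x • gradient p x, v⟫ := fun v => by
    rw [setIntegral_eq_integral_of_forall_compl_eq_zero fun x hx => ?_, real_inner_comm,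
      ← integral_inner hfp]
    · simp [real_inner_smul_right, inner_gradient_right]
    · rw [image_eq_zero_of_notMem_tsupport fun h => hx (hpO (tsupport_fderiv_subset ℝ h)),
        zero_apply, mul_zero]
  have hright : ∀ v, ∫ x in O, ⟪g x, v⟫ * p x = ⟪∫ x, p x • g x, v⟫ := fun v => by
    rw [setIntegral_eq_integral_of_forall_compl_eq_zero fun x hx => ?_, real_inner_comm,
      ← integral_inner hpg]
    · simp [real_inner_comm, real_inner_smul_right, mul_comm]
    · rw [image_eq_zero_of_notMem_tsupport fun h => hx (hpO h), mul_zero]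
  simp only [hleft, hright, ← inner_neg_left]
  exact ⟨fun h => ext_inner_right ℝ h, fun h v => by rw [h]⟩

theorem hasWeakGradOn_univ {f : 𝔼 → ℝ} {g : 𝔼 → 𝔼} :
    HasWeakGradOn univ f g ↔ HasWeakGrad f g := by
  simp [HasWeakGradOn, HasWeakGrad, locallyIntegrableOn_univ]

theorem hasWeakGrad_iff {f : 𝔼 → ℝ} {g : 𝔼 → 𝔼} :
    HasWeakGrad f g ↔ LocallyIntegrable f ∧ LocallyIntegrable g ∧
      ∀ p : 𝔼 → ℝ, ContDiff ℝ ∞ p → HasCompactSupport p →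
        ∫ x, f x • gradient p x = -∫ x, p x • g x := by
  simp [← hasWeakGradOn_univ, hasWeakGradOn_iff isOpen_univ, locallyIntegrableOn_univ]

theorem HasWeakGradOn.smul_of_tsupport_subset {O : Set 𝔼} (hO : IsOpen O) {f : 𝔼 → ℝ}
    {g : 𝔼 → 𝔼} (h : HasWeakGradOn O f g) {η : 𝔼 → ℝ} (hη : ContDiff ℝ ∞ η)
    (hηO : tsupport η ⊆ O) :
    HasWeakGrad (fun x => η x * f x) (fun x => η x • g x + f x • gradient η x) := by
  obtain ⟨hf, hg, hfg⟩ := (hasWeakGradOn_iff hO).1 h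
  have hηf := locallyIntegrable_smul_of_tsupport_subset hO hf hη.continuous hηO
  have hηg := locallyIntegrable_smul_of_tsupport_subset hO hg hη.continuous hηO
  have hfη := locallyIntegrable_smul_gradient hO hf (hη.of_le (by simp)) hηO
  refine hasWeakGrad_iff.2 ⟨hηf, hηg.add hfη, fun p hp hpc => ?_⟩
  have hprod := hfg (fun x => η x * p x) (hη.mul hp) hpc.mul_left
    ((tsupport_mul_subset_left).trans hηO)
  have hsplit : ∀ x, f x • gradient (fun x => η x * p x) x =
      (η x * f x) • gradient p x + p x • f x • gradient η x := fun x => by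
    rw [gradient_mul (hη.differentiable (by simp) x) (hp.differentiable (by simp) x)]
    module
  have hint₁ : Integrable fun x => (η x * f x) • gradient p x :=
    hηf.integrable_smul_right_of_hasCompactSupport
      (continuous_gradient (hp.of_le (by simp))) (hasCompactSupport_gradient hpc)
  have hint₂ : Integrable fun x => p x • f x • gradient η x :=
    hfη.integrable_smul_left_of_hasCompactSupport hp.continuous hpc
  have hint₃ : Integrable fun x => p x • η x • g x :=
    hηg.integrable_smul_left_of_hasCompactSupport hp.continuous hpc
  simp only [hsplit] at hprod
  rw [integral_add hint₁ hint₂] at hprod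
  simp only [smul_add]
  rw [integral_add hint₃ hint₂, eq_sub_of_add_eq hprod, neg_add, sub_eq_add_neg]
  simp only [mul_smul, smul_comm (η _)]

theorem HasWeakGrad.smul_contDiff {f : 𝔼 → ℝ} {g : 𝔼 → 𝔼} (h : HasWeakGrad f g) {η : 𝔼 → ℝ}
    (hη : ContDiff ℝ ∞ η) :
    HasWeakGrad (fun x => η x * f x) (fun x => η x • g x + f x • gradient η x) :=
  (hasWeakGradOn_univ.2 h).smul_of_tsupport_subset isOpen_univ hη (subset_univ _)

theorem HasWeakGrad.gradient_mollify {f : 𝔼 → ℝ} {g : 𝔼 → 𝔼} (h : HasWeakGrad f g) (n : ℕ) :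
    gradient (mollify volume n f) = mollify volume n g := by
  obtain ⟨hf, -, hfg⟩ := hasWeakGrad_iff.1 h
  ext1 x
  set ρ := (stdBump 𝔼 n).normed volume
  have hρ : ContDiff ℝ ∞ ρ := (stdBump 𝔼 n).contDiff_normed
  have hpc : HasCompactSupport fun y => ρ (x - y) :=
    (stdBump 𝔼 n).hasCompactSupport_normed.comp_homeomorph (Homeomorph.subLeft x)
  have hgrad : ∀ y, gradient (fun y => ρ (x - y)) y = -gradient ρ (x - y) := fun y => by
    rw [gradient, gradient, ← map_neg]
    congr 1
    have hsub := (hasFDerivAt_id (𝕜 := ℝ) y).const_sub x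
    simpa [ContinuousLinearMap.comp_neg, Function.comp_def] using
      ((hρ.differentiable (by simp) (x - y)).hasFDerivAt.comp y hsub).fderiv
  calc gradient (mollify volume n f) x
      = ∫ z, f (x - z) • gradient ρ z := by
        rw [gradient, fderiv_mollify n hf]
        let toGrad := (InnerProductSpace.toDual ℝ 𝔼).symm.toLinearIsometry
        refine (toGrad.integral_comp_comm _).symm.trans
          (integral_congr_ae (.of_forall fun z => ?_))
        exact map_smul _ _ _
    _ = -∫ y, f y • gradient (fun y => ρ (x - y)) y := by
        rw [← integral_sub_left_eq_self _ volume x, ← integral_neg]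
        simp only [hgrad, smul_neg, neg_neg, sub_sub_cancel]
    _ = ∫ y, ρ (x - y) • g y := by
        rw [hfg (fun y => ρ (x - y)) (hρ.comp (contDiff_const.sub contDiff_id)) hpc, neg_neg]
    _ = mollify volume n g x := by
        rw [mollify_apply, ← integral_sub_left_eq_self _ volume x]
        simp only [sub_sub_cancel, ρ]

theorem HasWeakGrad.eLpNorm_sub_comp_sub_le {w : 𝔼 → ℝ} {gw : 𝔼 → 𝔼} (h : HasWeakGrad w gw)
    (z : 𝔼) {p : ENNReal} (hp : 1 ≤ p) (hp' : p ≠ ⊤) :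
    eLpNorm (fun x => w x - w (x - z)) p ≤ ‖z‖ₑ * eLpNorm gw p := by
  have hw := fun n => contDiff_mollify (μ := volume) n h.1
  have hlim := ae_tendsto_mollify h.1
  have hbound : ∀ n, eLpNorm (fun x => mollify volume n w x - mollify volume n w (x - z)) p
      ≤ ‖z‖ₑ * eLpNorm gw p := fun n => by
    refine (eLpNorm_sub_comp_sub_le_of_contDiff ((hw n).of_le (by simp)) z hp hp').trans ?_
    gcongr
    rw [← eLpNorm_congr_enorm_ae (.of_forall (enorm_gradient (mollify volume n w))),
      h.gradient_mollify]
    exact eLpNorm_mollify_le n h.2.1.aestronglyMeasurable hp hp'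
  refine (Lp.eLpNorm_lim_le_liminf_eLpNorm (fun n => ?_) _ ?_).trans
    (liminf_le_of_frequently_le' (.of_forall hbound))
  · have := (hw n).continuous
    exact Continuous.aestronglyMeasurable (by fun_prop)
  · filter_upwards [hlim, (measurePreserving_sub_right volume z).quasiMeasurePreserving.ae hlim]
      with x hx hxz using hx.sub hxz

theorem HasWeakGrad.of_tendsto_integral {F : ℕ → 𝔼 → ℝ} {G : ℕ → 𝔼 → 𝔼} {f : 𝔼 → ℝ} {g : 𝔼 → 𝔼}
    (h : ∀ n, HasWeakGrad (F n) (G n)) (hf : LocallyIntegrable f) (hg : LocallyIntegrable g)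
    (hF : ∀ φ : 𝔼 → 𝔼, Continuous φ → HasCompactSupport φ →
      Tendsto (fun n => ∫ x, F n x • φ x) atTop (𝓝 (∫ x, f x • φ x)))
    (hG : ∀ φ : 𝔼 → ℝ, Continuous φ → HasCompactSupport φ →
      Tendsto (fun n => ∫ x, φ x • G n x) atTop (𝓝 (∫ x, φ x • g x))) : HasWeakGrad f g := by
  refine hasWeakGrad_iff.2 ⟨hf, hg, fun p hp hpc => ?_⟩
  refine tendsto_nhds_unique (hF _ (continuous_gradient (hp.of_le (by simp)))
    (hasCompactSupport_gradient hpc)) ((hG p hp.continuous hpc).neg.congr fun n => ?_)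
  rw [(hasWeakGrad_iff.1 (h n)).2.2 p hp hpc]

theorem hasWeakGrad_gradient {ψ : 𝔼 → ℝ} (hψ : ContDiff ℝ 1 ψ) :
    HasWeakGrad ψ (gradient ψ) := by
  refine ⟨hψ.continuous.locallyIntegrable, (continuous_gradient hψ).locallyIntegrable,
    fun p hp hpc v => ?_⟩
  have hψ' := hψ.continuous_fderiv one_ne_zero
  have hp' := hp.continuous_fderiv (by simp)
  simp only [inner_gradient_left]
  refine integral_mul_fderiv_eq_neg_fderiv_mul_of_integrable ?_ ?_ ?_
    (fun x _ => hψ.differentiable one_ne_zero x) (fun x _ => hp.differentiable (by simp) x)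
  · exact ((hψ'.clm_apply continuous_const).mul hp.continuous).integrable_of_hasCompactSupport
      hpc.mul_left
  · exact (hψ.continuous.mul (hp'.clm_apply continuous_const)).integrable_of_hasCompactSupport
      (hpc.fderiv_apply (𝕜 := ℝ) v).mul_left
  · exact (hψ.continuous.mul hp.continuous).integrable_of_hasCompactSupport hpc.mul_left

theorem locallyIntegrable_of_bounded {f : 𝔼 → ℝ} (hf : AEStronglyMeasurable f) {C : ℝ}
    (hC : ∀ x, |f x| ≤ C) : LocallyIntegrable f :=
  (locallyIntegrable_const C).mono hf (.of_forall fun x => (hC x).trans (le_abs_self C))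

theorem HasWeakGrad.comp_contDiff {f : 𝔼 → ℝ} {g : 𝔼 → 𝔼} (h : HasWeakGrad f g)
    (hg : Integrable g) {T : ℝ → ℝ} (hT : ContDiff ℝ ∞ T) {B C : ℝ} (hTB : ∀ t, |T t| ≤ B)
    (hTC : ∀ t, |deriv T t| ≤ C) :
    HasWeakGrad (fun x => T (f x)) (fun x => deriv T (f x) • g x) := by
  have hf_meas := h.1.aestronglyMeasurable
  have hT' : Continuous (deriv T) := hT.continuous_deriv (by simp)
  have hsmooth : ∀ n, ContDiff ℝ ∞ (mollify volume n f) := fun n => contDiff_mollify n h.1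
  have hlim := ae_tendsto_mollify h.1
  have hgrad : ∀ n x, gradient (fun x => T (mollify volume n f x)) x =
      deriv T (mollify volume n f x) • mollify volume n g x := fun n x => by
    rw [← h.gradient_mollify, gradient, gradient, ← map_smul]
    congr 1
    exact ((hT.differentiable (by simp) _).hasDerivAt.comp_hasFDerivAt x
      ((hsmooth n).differentiable (by simp) x).hasFDerivAt).fderiv
  refine .of_tendsto_integral
    (fun n => hasWeakGrad_gradient ((hT.comp (hsmooth n)).of_le (by simp)))
    (locallyIntegrable_of_bounded (hT.continuous.comp_aestronglyMeasurable hf_meas) fun x => hTB _)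
    (hg.bdd_smul C (hT'.comp_aestronglyMeasurable hf_meas)
      (.of_forall fun x => hTC _)).locallyIntegrable (fun φ hφ hφc => ?_) fun φ hφ hφc => ?_
  · have hφi := hφ.integrable_of_hasCompactSupport (μ := volume) hφc
    exact tendsto_integral_smul_of_bounded
      (fun n => (hT.comp (hsmooth n)).continuous.aestronglyMeasurable) (fun n x => hTB _)
      (hlim.mono fun x hx => (hT.continuous.tendsto _).comp hx) (fun _ => hφi) hφi (by simp)
  · obtain ⟨M, hM⟩ := hφc.exists_bound_of_continuous hφ
    have hlim := tendsto_integral_smul_of_bounded (C := M * C)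
      (b := fun n x => φ x * deriv T (mollify volume n f x))
      (fun n => (hφ.mul (hT'.comp (hsmooth n).continuous)).aestronglyMeasurable)
      (fun n x => (abs_mul _ _).trans_le (mul_le_mul (hM x) (hTC _) (abs_nonneg _)
        ((norm_nonneg _).trans (hM x))))
      (hlim.mono fun x hx => ((hT'.tendsto _).comp hx).const_mul (φ x))
      (fun n => integrable_mollify n hg) hg (tendsto_eLpNorm_mollify_sub hg)
    simpa only [Function.comp_def, hgrad, mul_smul] using hlim

theorem HasWeakGrad.mul_of_bounded {f w : 𝔼 → ℝ} {gf gw : 𝔼 → 𝔼} (hf : HasWeakGrad f gf)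
    (hw : HasWeakGrad w gw) (hgf : Integrable gf) {B C : ℝ} (hB : ∀ x, |f x| ≤ B)
    (hC : ∀ x, |w x| ≤ C) :
    HasWeakGrad (fun x => f x * w x) (fun x => f x • gw x + w x • gf x) := by
  have hf_meas := hf.1.aestronglyMeasurable
  have hw_meas := hw.1.aestronglyMeasurable
  have hsmooth : ∀ n, ContDiff ℝ ∞ (mollify volume n f) := fun n => contDiff_mollify n hf.1
  have hlim := ae_tendsto_mollify hf.1
  have hmeas : ∀ n, AEStronglyMeasurable (mollify volume n f) := fun n =>
    (hsmooth n).continuous.aestronglyMeasurable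
  have hbound : ∀ n x, |mollify volume n f x| ≤ B := fun n =>
    norm_mollify_le (F := ℝ) n hB
  have hfgw : LocallyIntegrable fun x => f x • gw x :=
    (hw.2.1.smul B).mono (hf_meas.smul hw.2.1.aestronglyMeasurable) (.of_forall fun x => by
      rw [norm_smul, Pi.smul_apply, norm_smul]
      exact mul_le_mul_of_nonneg_right ((hB x).trans (le_abs_self B)) (norm_nonneg _))
  have hwgf : Integrable fun x => w x • gf x := hgf.bdd_smul C hw_meas (.of_forall hC)
  refine .of_tendsto_integral (fun n => hw.smul_contDiff (hsmooth n))
    (locallyIntegrable_of_bounded (C := B * C) (hf_meas.mul hw_meas) fun x => ?_)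
    (hfgw.add hwgf.locallyIntegrable) (fun φ hφ hφc => ?_) fun φ hφ hφc => ?_
  · rw [abs_mul]
    exact mul_le_mul (hB x) (hC x) (abs_nonneg _) ((abs_nonneg _).trans (hB x))
  · have hwφ := hw.1.integrable_smul_right_of_hasCompactSupport hφ hφc
    simpa only [smul_smul] using tendsto_integral_smul_of_bounded hmeas hbound hlim
      (fun _ => hwφ) hwφ (by simp)
  · obtain ⟨M, hM⟩ := hφc.exists_bound_of_continuous hφ
    have hφgw := hw.2.1.integrable_smul_left_of_hasCompactSupport hφ hφc
    have hφw : ∀ x, |φ x * w x| ≤ M * C := fun x => (abs_mul _ _).trans_le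
      (mul_le_mul (hM x) (hC x) (abs_nonneg _) ((norm_nonneg _).trans (hM x)))
    have hφw_meas := hφ.aestronglyMeasurable.mul hw_meas
    have hfirst := tendsto_integral_smul_of_bounded hmeas hbound hlim
      (fun _ => hφgw) hφgw (by simp)
    have hsecond := tendsto_integral_smul_of_bounded (fun _ => hφw_meas) (fun _ => hφw)
      (.of_forall fun x => tendsto_const_nhds) (fun n => integrable_mollify n hgf) hgf
      (tendsto_eLpNorm_mollify_sub hgf)
    have hsum : ∀ (u : 𝔼 → ℝ) (v : 𝔼 → 𝔼), AEStronglyMeasurable u → (∀ x, |u x| ≤ B) →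
        Integrable v → ∫ x, φ x • (u x • gw x + w x • v x) =
          (∫ x, u x • φ x • gw x) + ∫ x, (φ x * w x) • v x := fun u v hu huB hv => by
      simp only [smul_add, smul_comm (φ _) (u _), ← mul_smul (φ _) (w _)]
      exact integral_add (hφgw.bdd_smul B hu (.of_forall huB))
        (hv.bdd_smul (M * C) hφw_meas (.of_forall hφw))
    rw [hsum f gf hf_meas hB hgf]
    refine (hfirst.add hsecond).congr fun n => ?_
    rw [hf.gradient_mollify, hsum _ _ (hmeas n) (hbound n) (integrable_mollify n hgf)]
    rfl

theorem HasWeakGrad.of_dominated {F : ℕ → 𝔼 → ℝ} {G : ℕ → 𝔼 → 𝔼} {f : 𝔼 → ℝ} {g : 𝔼 → 𝔼}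
    (h : ∀ n, HasWeakGrad (F n) (G n)) {Φ Γ : 𝔼 → ℝ} (hΦ : LocallyIntegrable Φ)
    (hΓ : LocallyIntegrable Γ) (hFΦ : ∀ n x, |F n x| ≤ Φ x) (hGΓ : ∀ n x, ‖G n x‖ ≤ Γ x)
    (hF : ∀ᵐ x, Tendsto (fun n => F n x) atTop (𝓝 (f x)))
    (hG : ∀ᵐ x, Tendsto (fun n => G n x) atTop (𝓝 (g x))) : HasWeakGrad f g := by
  have hFm := fun n => (h n).1.aestronglyMeasurable
  have hGm := fun n => (h n).2.1.aestronglyMeasurable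
  have hf : LocallyIntegrable f := hΦ.mono (aestronglyMeasurable_of_tendsto_ae _ hFm hF)
    (hF.mono fun x hx => (le_of_tendsto' hx.norm (hFΦ · x)).trans (le_abs_self _))
  have hg : LocallyIntegrable g := hΓ.mono (aestronglyMeasurable_of_tendsto_ae _ hGm hG)
    (hG.mono fun x hx => (le_of_tendsto' hx.norm (hGΓ · x)).trans (le_abs_self _))
  refine .of_tendsto_integral h hf hg (fun φ hφ hφc => ?_) fun φ hφ hφc => ?_
  · refine tendsto_integral_of_dominated_convergence (fun x => Φ x * ‖φ x‖)
      (fun n => (hFm n).smul hφ.aestronglyMeasurable)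
      (hΦ.integrable_smul_right_of_hasCompactSupport hφ.norm hφc.norm)
      (fun n => .of_forall fun x => ?_) (hF.mono fun x hx => hx.smul_const _)
    rw [norm_smul]
    exact mul_le_mul_of_nonneg_right (hFΦ n x) (norm_nonneg _)
  · refine tendsto_integral_of_dominated_convergence (fun x => ‖φ x‖ * Γ x)
      (fun n => hφ.aestronglyMeasurable.smul (hGm n))
      (hΓ.integrable_smul_left_of_hasCompactSupport hφ.norm hφc.norm)
      (fun n => .of_forall fun x => ?_) (hG.mono fun x hx => hx.const_smul _)
    rw [norm_smul]
    exact mul_le_mul_of_nonneg_left (hGΓ n x) (norm_nonneg _)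

/-- A smooth bounded substitute for the cut-off of a real number at the levels `±(n + 1)`. -/
noncomputable def sinTruncate (n : ℕ) (t : ℝ) : ℝ := (n + 1) * Real.sin (t / (n + 1))

theorem contDiff_sinTruncate (n : ℕ) : ContDiff ℝ ∞ (sinTruncate n) :=
  contDiff_const.mul (Real.contDiff_sin.comp (contDiff_id.div_const _))

theorem abs_sinTruncate_le (n : ℕ) (t : ℝ) : |sinTruncate n t| ≤ n + 1 := by
  rw [sinTruncate, abs_mul, abs_of_pos (by positivity)]
  exact mul_le_of_le_one_right (by positivity) (Real.abs_sin_le_one _)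

theorem sinTruncate_eq_sinc_mul (n : ℕ) (t : ℝ) :
    sinTruncate n t = Real.sinc (t / (n + 1)) * t := by
  rcases eq_or_ne t 0 with rfl | ht
  · simp [sinTruncate]
  · rw [sinTruncate, Real.sinc_of_ne_zero (by positivity)]
    field_simp

theorem abs_sinTruncate_le_abs (n : ℕ) (t : ℝ) : |sinTruncate n t| ≤ |t| := by
  rw [sinTruncate_eq_sinc_mul, abs_mul]
  exact mul_le_of_le_one_left (abs_nonneg t) (Real.abs_sinc_le_one _)

theorem deriv_sinTruncate (n : ℕ) (t : ℝ) : deriv (sinTruncate n) t = Real.cos (t / (n + 1)) := by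
  have hderiv : HasDerivAt (sinTruncate n) ((n + 1) * (Real.cos (t / (n + 1)) * (1 / (n + 1)))) t :=
    (((hasDerivAt_id t).div_const _).sin).const_mul _
  rw [hderiv.deriv]
  field_simp

theorem abs_deriv_sinTruncate_le (n : ℕ) (t : ℝ) : |deriv (sinTruncate n) t| ≤ 1 := by
  rw [deriv_sinTruncate]
  exact Real.abs_cos_le_one _

theorem tendsto_div_natCast_add_one (t : ℝ) :
    Tendsto (fun n : ℕ => t / (n + 1 : ℝ)) atTop (𝓝 0) := by
  simpa [div_eq_mul_inv] using (tendsto_one_div_add_atTop_nhds_zero_nat (𝕜 := ℝ)).const_mul t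

theorem tendsto_deriv_sinTruncate (t : ℝ) :
    Tendsto (fun n => deriv (sinTruncate n) t) atTop (𝓝 1) := by
  simpa only [deriv_sinTruncate, Real.cos_zero, Function.comp_def] using
    (Real.continuous_cos.tendsto 0).comp (tendsto_div_natCast_add_one t)

theorem tendsto_sinTruncate (t : ℝ) : Tendsto (fun n => sinTruncate n t) atTop (𝓝 t) := by
  simpa only [sinTruncate_eq_sinc_mul, Real.sinc_zero, one_mul, Function.comp_def] using
    ((Real.continuous_sinc.tendsto 0).comp (tendsto_div_natCast_add_one t)).mul_const t

theorem HasWeakGrad.truncate {f : 𝔼 → ℝ} {g : 𝔼 → 𝔼} (h : HasWeakGrad f g) (hg : Integrable g)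
    (n : ℕ) :
    HasWeakGrad (fun x => sinTruncate n (f x)) (fun x => deriv (sinTruncate n) (f x) • g x) :=
  h.comp_contDiff hg (contDiff_sinTruncate n) (abs_sinTruncate_le n) (abs_deriv_sinTruncate_le n)

theorem norm_deriv_sinTruncate_smul_le {F : Type*} [SeminormedAddCommGroup F] [NormedSpace ℝ F]
    (n : ℕ) (t : ℝ) (y : F) : ‖deriv (sinTruncate n) t • y‖ ≤ ‖y‖ := by
  rw [norm_smul]
  exact mul_le_of_le_one_left (norm_nonneg y) (abs_deriv_sinTruncate_le n t)

theorem HasWeakGrad.mul {f w : 𝔼 → ℝ} {gf gw : 𝔼 → 𝔼} (hf : HasWeakGrad f gf)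
    (hw : HasWeakGrad w gw) (hgf : Integrable gf) (hgw : Integrable gw) {B : ℝ}
    (hB : ∀ x, |f x| ≤ B) (hwgf : LocallyIntegrable fun x => w x • gf x) :
    HasWeakGrad (fun x => f x * w x) (fun x => f x • gw x + w x • gf x) := by
  have hB₀ : 0 ≤ B := (abs_nonneg _).trans (hB 0)
  refine .of_dominated (Φ := fun x => B * |w x|) (Γ := fun x => B * ‖gw x‖ + ‖w x • gf x‖)
    (fun n => hf.mul_of_bounded (hw.truncate hgw n) hgf hB fun x => abs_sinTruncate_le n _)
    (.smul (fun x => (hw.1 x).norm) B) ((hgw.norm.locallyIntegrable.smul B).add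
      fun x => (hwgf x).norm) (fun n x => ?_) (fun n x => ?_)
    (.of_forall fun x => (tendsto_sinTruncate _).const_mul _) (.of_forall fun x => ?_)
  · rw [abs_mul]
    exact mul_le_mul (hB x) (abs_sinTruncate_le_abs n _) (abs_nonneg _) hB₀
  · refine (norm_add_le _ _).trans (add_le_add ?_ ?_)
    · rw [norm_smul]
      exact mul_le_mul (hB x) (norm_deriv_sinTruncate_smul_le n _ _) (norm_nonneg _) hB₀
    · rw [norm_smul, norm_smul]
      exact mul_le_mul_of_nonneg_right (abs_sinTruncate_le_abs n _) (norm_nonneg _)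
  · simpa using (((tendsto_deriv_sinTruncate (w x)).smul_const (gw x)).const_smul (f x)).add
      ((tendsto_sinTruncate (w x)).smul_const (gf x))

theorem smul_fderiv_mollify_sub {w f : 𝔼 → ℝ} (hf : LocallyIntegrable f)
    (hfw : LocallyIntegrable fun x => f x * w x) (n : ℕ) (x : 𝔼) :
    w x • fderiv ℝ (mollify volume n f) x - fderiv ℝ (mollify volume n fun x => f x * w x) x =
      ∫ z, ((w x - w (x - z)) * f (x - z)) • fderiv ℝ ((stdBump 𝔼 n).normed volume) z := by
  have hint : ∀ {u : 𝔼 → ℝ}, LocallyIntegrable u →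
      Integrable fun z => u (x - z) • fderiv ℝ ((stdBump 𝔼 n).normed volume) z := fun hu =>
    ((stdBump 𝔼 n).hasCompactSupport_normed.fderiv ℝ).convolutionExists_left
      (ContinuousLinearMap.lsmul ℝ ℝ).flip
      ((stdBump 𝔼 n).contDiff_normed.continuous_fderiv (n := 1) one_ne_zero) hu x
  rw [fderiv_mollify n hf, fderiv_mollify n hfw, ← integral_smul]
  refine (integral_sub ((hint hf).smul (w x)) (hint hfw)).symm.trans
    (integral_congr_ae (.of_forall fun z => ?_))
  simp only [Pi.smul_apply, sub_mul, sub_smul, mul_smul, smul_comm (f _)]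

theorem HasWeakGrad.eLpNorm_smul_fderiv_mollify_sub_le {w f : 𝔼 → ℝ} {gw : 𝔼 → 𝔼}
    (hw : HasWeakGrad w gw) (hf : LocallyIntegrable f) (hfw : LocallyIntegrable fun x => f x * w x)
    {B : ℝ} (hB : ∀ x, |f x| ≤ B) {p : ENNReal} (hp : 1 ≤ p) (hp' : p ≠ ⊤) (n : ℕ) :
    eLpNorm (fun x => w x • fderiv ℝ (mollify volume n f) x -
        fderiv ℝ (mollify volume n fun x => f x * w x) x) p ≤
      ENNReal.ofReal (2 * B) * (∫⁻ z, ‖fderiv ℝ ((stdBump 𝔼 0).normed volume) z‖ₑ) *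
        eLpNorm gw p := by
  set ρ := (stdBump 𝔼 n).normed volume
  have hκ : Measurable fun z => ENNReal.ofReal B * ‖fderiv ℝ ρ z‖ₑ :=
    ((measurable_fderiv ℝ ρ).enorm).const_mul _
  have hpointwise : ∀ x z, ‖((w x - w (x - z)) * f (x - z)) • fderiv ℝ ρ z‖ₑ ≤
      ENNReal.ofReal B * ‖fderiv ℝ ρ z‖ₑ * ‖w x - w (x - z)‖ₑ := fun x z => by
    rw [enorm_smul, enorm_mul, mul_comm, mul_comm ‖w x - _‖ₑ, ← mul_assoc, mul_comm ‖_‖ₑ ‖f _‖ₑ,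
      Real.enorm_eq_ofReal_abs (f _)]
    gcongr
    exact hB _
  have htranslate : ∀ z, ENNReal.ofReal B * ‖fderiv ℝ ρ z‖ₑ ≠ 0 →
      eLpNorm (fun x => w x - w (x - z)) p ≤
        ENNReal.ofReal (stdBump 𝔼 n).rOut * eLpNorm gw p := fun z hz => by
    refine (hw.eLpNorm_sub_comp_sub_le z hp hp').trans ?_
    gcongr
    have hz' : z ∈ tsupport ρ := tsupport_fderiv_subset ℝ (subset_tsupport _ fun h => hz (by
      rw [← ofReal_norm, h, norm_zero, ENNReal.ofReal_zero, mul_zero]))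
    rw [(stdBump 𝔼 n).tsupport_normed_eq, mem_closedBall_zero_iff] at hz'
    rw [← ofReal_norm]
    exact ENNReal.ofReal_le_ofReal hz'
  simp only [smul_fderiv_mollify_sub hf hfw]
  refine (eLpNorm_integral_le_lintegral_mul hp hp' hκ.aemeasurable
    (h := fun x z => w x - w (x - z)) (hw.1.aestronglyMeasurable.comp_fst.sub
      (hw.1.aestronglyMeasurable.comp_quasiMeasurePreserving
        (quasiMeasurePreserving_sub_of_right_invariant _ _))) hpointwise htranslate).trans_eq ?_
  rw [lintegral_const_mul _ (measurable_fderiv ℝ ρ).enorm, lintegral_enorm_fderiv_normed_stdBump]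
  have hscale : ENNReal.ofReal B * ENNReal.ofReal (n + 1) * ENNReal.ofReal (stdBump 𝔼 n).rOut =
      ENNReal.ofReal (2 * B) := by
    have hB₀ : 0 ≤ B := (abs_nonneg _).trans (hB 0)
    rw [← ENNReal.ofReal_mul hB₀, ← ENNReal.ofReal_mul (by positivity)]
    simp only [stdBump]
    field_simp
  rw [← hscale]
  ring

theorem HasWeakGrad.eLpNorm_smul_gradient_mollify_le {w f : 𝔼 → ℝ} {gw G : 𝔼 → 𝔼}
    (hw : HasWeakGrad w gw) (hfw : HasWeakGrad (fun x => f x * w x) G) (hf : LocallyIntegrable f)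
    {B : ℝ} (hB : ∀ x, |f x| ≤ B) {p : ENNReal} (hp : 1 ≤ p) (hp' : p ≠ ⊤) (n : ℕ) :
    eLpNorm (fun x => w x • gradient (mollify volume n f) x) p ≤
      ENNReal.ofReal (2 * B) * (∫⁻ z, ‖fderiv ℝ ((stdBump 𝔼 0).normed volume) z‖ₑ) *
        eLpNorm gw p + eLpNorm G p := by
  have hmeas : ∀ {u : 𝔼 → ℝ}, LocallyIntegrable u →
      AEStronglyMeasurable (fderiv ℝ (mollify volume n u)) := fun hu =>
    ((contDiff_mollify n hu).continuous_fderiv (by simp)).aestronglyMeasurable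
  have hfw_le : eLpNorm (fderiv ℝ (mollify volume n fun x => f x * w x)) p ≤ eLpNorm G p := by
    rw [← eLpNorm_congr_enorm_ae (.of_forall (enorm_gradient _)), hfw.gradient_mollify]
    exact eLpNorm_mollify_le n hfw.2.1.aestronglyMeasurable hp hp'
  have hcomm := hw.eLpNorm_smul_fderiv_mollify_sub_le hf hfw.1 hB hp hp' n
  rw [eLpNorm_congr_enorm_ae (g := w • fderiv ℝ (mollify volume n f)) (.of_forall fun x => by
    simp only [Pi.smul_apply', enorm_smul, enorm_gradient]),
    ← sub_add_cancel (w • _) (fderiv ℝ (mollify volume n fun x => f x * w x))]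
  exact (eLpNorm_add_le ((hw.1.aestronglyMeasurable.smul (hmeas hf)).sub (hmeas hfw.1))
    (hmeas hfw.1) hp).trans (add_le_add hcomm hfw_le)

/-- The pair `(f, g)` multiplied by the weight `w`, with values in the Hilbert sum `ℝ ⊕ ℝᵈ`. Its
`L²` norm is the norm of the function `f` with weak gradient `g` in the Sobolev space of density
`w ^ 2`. -/
noncomputable def weightedPair (w f : 𝔼 → ℝ) (g : 𝔼 → 𝔼) (x : 𝔼) : WithLp 2 (ℝ × 𝔼) :=
  WithLp.toLp 2 (w x * f x, w x • g x)

theorem norm_weightedPair_sq (w f : 𝔼 → ℝ) (g : 𝔼 → 𝔼) (x : 𝔼) :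
    ‖weightedPair w f g x‖ ^ 2 = f x ^ 2 * w x ^ 2 + ‖g x‖ ^ 2 * w x ^ 2 := by
  have hnorm : ‖weightedPair w f g x‖ ^ 2 = ‖w x * f x‖ ^ 2 + ‖w x • g x‖ ^ 2 :=
    WithLp.prod_norm_sq_eq_of_L2 _
  simp only [hnorm, norm_mul, norm_smul, mul_pow, Real.norm_eq_abs, sq_abs, mul_comm (w x ^ 2)]

theorem aestronglyMeasurable_weightedPair {μ : Measure 𝔼} {w f : 𝔼 → ℝ} {g : 𝔼 → 𝔼}
    (hw : AEStronglyMeasurable w μ) (hf : AEStronglyMeasurable f μ)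
    (hg : AEStronglyMeasurable g μ) : AEStronglyMeasurable (weightedPair w f g) μ :=
  (WithLp.prod_continuous_toLp 2 ℝ 𝔼).comp_aestronglyMeasurable
    ((hw.mul hf).prodMk (hw.smul hg))

theorem memLp_weightedPair {μ : Measure 𝔼} {w f : 𝔼 → ℝ} {g : 𝔼 → 𝔼} {p : ENNReal} :
    MemLp (weightedPair w f g) p μ ↔
      MemLp (fun x => w x * f x) p μ ∧ MemLp (fun x => w x • g x) p μ :=
  memLp_prodLp_iff

theorem eLpNorm_weightedPair_le {μ : Measure 𝔼} {w f : 𝔼 → ℝ} {g : 𝔼 → 𝔼}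
    (hf : AEStronglyMeasurable (fun x => w x * f x) μ)
    (hg : AEStronglyMeasurable (fun x => w x • g x) μ) {p : ENNReal} (hp : 1 ≤ p) :
    eLpNorm (weightedPair w f g) p μ ≤
      eLpNorm (fun x => w x * f x) p μ + eLpNorm (fun x => w x • g x) p μ := by
  rw [← eLpNorm_norm fun x => w x * f x, ← eLpNorm_norm fun x => w x • g x]
  refine (eLpNorm_mono_real fun x => ?_).trans (eLpNorm_add_le hf.norm hg.norm hp)
  rw [weightedPair, WithLp.prod_norm_eq_of_L2]
  exact Real.sqrt_le_iff.2 ⟨add_nonneg (norm_nonneg _) (norm_nonneg _),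
    pow_add_pow_le (norm_nonneg _) (norm_nonneg _) two_ne_zero⟩

theorem tendsto_weightedPair {w : 𝔼 → ℝ} {F : ℕ → 𝔼 → ℝ} {f : 𝔼 → ℝ} {G : ℕ → 𝔼 → 𝔼}
    {g : 𝔼 → 𝔼} {x : 𝔼} (hF : Tendsto (fun n => F n x) atTop (𝓝 (f x)))
    (hG : Tendsto (fun n => G n x) atTop (𝓝 (g x))) :
    Tendsto (fun n => weightedPair w (F n) (G n) x) atTop (𝓝 (weightedPair w f g x)) :=
  ((WithLp.prod_continuous_toLp 2 ℝ 𝔼).tendsto _).comp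
    ((hF.const_mul (w x)).prodMk_nhds (hG.const_smul (w x)))

/-- The weighted pairs `(ψ, ∇ψ)` of the test functions `ψ ∈ C_c^∞(V)`, as elements of `L²`. -/
noncomputable def smoothPairs (w : 𝔼 → ℝ) (V : Set 𝔼) :
    Submodule ℝ (Lp (WithLp 2 (ℝ × 𝔼)) 2 (volume : Measure 𝔼)) where
  carrier := {u | ∃ ψ : 𝔼 → ℝ, ContDiff ℝ ∞ ψ ∧ HasCompactSupport ψ ∧ tsupport ψ ⊆ V ∧
    u =ᵐ[volume] weightedPair w ψ (gradient ψ)}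
  zero_mem' := by
    refine ⟨0, contDiff_zero_fun, .zero, by simp [tsupport], ?_⟩
    filter_upwards [Lp.coeFn_zero (WithLp 2 (ℝ × 𝔼)) 2 volume] with x hx
    rw [hx]
    simp only [weightedPair, gradient, fderiv_zero, Pi.zero_apply, map_zero, mul_zero, smul_zero]
    rfl
  add_mem' := by
    rintro u v ⟨ψ, hψ, hψc, hψV, hu⟩ ⟨φ, hφ, hφc, hφV, hv⟩
    refine ⟨ψ + φ, hψ.add hφ, hψc.add hφc,
      (tsupport_add ψ φ).trans (union_subset hψV hφV), ?_⟩
    filter_upwards [Lp.coeFn_add u v, hu, hv] with x huv hux hvx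
    rw [huv, Pi.add_apply, hux, hvx]
    simp only [weightedPair, gradient, fderiv_add (hψ.differentiable (by simp) x)
      (hφ.differentiable (by simp) x), map_add, Pi.add_apply, mul_add, smul_add]
    rfl
  smul_mem' := by
    rintro a u ⟨ψ, hψ, hψc, hψV, hu⟩
    refine ⟨a • ψ, contDiff_const.smul hψ, hψc.comp_left (g := (a • ·)) (smul_zero a),
      (tsupport_smul_subset_right (fun _ => a) ψ).trans hψV, ?_⟩
    filter_upwards [Lp.coeFn_smul a u, hu] with x hau hux
    rw [hau, Pi.smul_apply, hux]
    simp only [weightedPair, gradient, fderiv_const_smul (hψ.differentiable (by simp) x), map_smul,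
      Pi.smul_apply, smul_eq_mul, mul_left_comm (w x), smul_comm (w x)]
    rfl

theorem HasWeakGrad.exists_eLpNorm_weightedPair_mollify_le {w f : 𝔼 → ℝ} {gw gf : 𝔼 → 𝔼}
    (hw : HasWeakGrad w gw) (hgw : Integrable gw) {p : ENNReal} (hp : 1 ≤ p) (hp' : p ≠ ⊤)
    (hwp : MemLp w p) (hgwp : MemLp gw p) (hf : HasWeakGrad f gf) (hgf : Integrable gf)
    (hwgf : MemLp (fun x => w x • gf x) p) {B : ℝ} (hB : ∀ x, |f x| ≤ B) :
    ∃ C ≠ ⊤, ∀ n, eLpNorm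
      (weightedPair w (mollify volume n f) (gradient (mollify volume n f))) p ≤ C := by
  have hG : MemLp (fun x => f x • gw x + w x • gf x) p :=
    .add (.of_le_mul hgwp (hf.1.aestronglyMeasurable.smul hgwp.1) (.of_forall fun x => by
      rw [norm_smul]
      exact mul_le_mul_of_nonneg_right (hB x) (norm_nonneg _))) hwgf
  have hsmooth : ∀ n, ContDiff ℝ ∞ (mollify volume n f) := fun n => contDiff_mollify n hf.1
  have hvalue : ∀ n, eLpNorm (fun x => w x * mollify volume n f x) p ≤
      ENNReal.ofReal B * eLpNorm w p := fun n =>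
    eLpNorm_le_mul_eLpNorm_of_ae_le_mul (.of_forall fun x => by
      rw [norm_mul, mul_comm]
      exact mul_le_mul_of_nonneg_right (norm_mollify_le n hB x) (norm_nonneg _)) p
  have hgrad := hw.eLpNorm_smul_gradient_mollify_le
    (hf.mul hw hgf hgw hB (hwgf.locallyIntegrable hp)) hf.1 hB hp hp'
  refine ⟨_, ?_, fun n => (eLpNorm_weightedPair_le
    (hwp.1.mul (hsmooth n).continuous.aestronglyMeasurable)
    (hwp.1.smul (continuous_gradient ((hsmooth n).of_le (by simp))).aestronglyMeasurable)
    hp).trans (add_le_add (hvalue n) (hgrad n))⟩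
  exact ENNReal.add_ne_top.2 ⟨ENNReal.mul_ne_top ENNReal.ofReal_ne_top hwp.2.ne,
    ENNReal.add_ne_top.2 ⟨ENNReal.mul_ne_top (ENNReal.mul_ne_top ENNReal.ofReal_ne_top
      (integrable_fderiv_normed_stdBump 0).2.ne) hgwp.2.ne, hG.2.ne⟩⟩

theorem toLp_mem_smoothPairs {w ψ : 𝔼 → ℝ} {V : Set 𝔼} (hψ : ContDiff ℝ ∞ ψ)
    (hψc : HasCompactSupport ψ) (hψV : tsupport ψ ⊆ V)
    (h : MemLp (weightedPair w ψ (gradient ψ)) 2 volume) : h.toLp ∈ smoothPairs w V :=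
  ⟨ψ, hψ, hψc, hψV, h.coeFn_toLp⟩

theorem HasWeakGrad.toLp_mem_closure_smoothPairs_of_bounded {w f : 𝔼 → ℝ} {gw gf : 𝔼 → 𝔼}
    (hw : HasWeakGrad w gw) (hgw : Integrable gw) (hw₂ : MemLp w 2) (hgw₂ : MemLp gw 2)
    (hf : HasWeakGrad f gf) (hgf : Integrable gf) (hfc : HasCompactSupport f) {V : Set 𝔼}
    (hV : IsOpen V) (hfV : tsupport f ⊆ V) {B : ℝ} (hB : ∀ x, |f x| ≤ B)
    (hF : MemLp (weightedPair w f gf) 2 volume) :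
    hF.toLp ∈ (smoothPairs w V).topologicalClosure := by
  obtain ⟨C, hC, hbound⟩ := hw.exists_eLpNorm_weightedPair_mollify_le hgw one_le_two
    ENNReal.ofNat_ne_top hw₂ hgw₂ hf hgf (memLp_weightedPair.1 hF).2 hB
  have hsmooth : ∀ n, ContDiff ℝ ∞ (mollify volume n f) := fun n => contDiff_mollify n hf.1
  have hmem : ∀ n, MemLp
      (weightedPair w (mollify volume n f) (gradient (mollify volume n f))) 2 := fun n =>
    ⟨aestronglyMeasurable_weightedPair hw₂.1 (hsmooth n).continuous.aestronglyMeasurable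
      (continuous_gradient ((hsmooth n).of_le (by simp))).aestronglyMeasurable,
      (hbound n).trans_lt hC.lt_top⟩
  refine toLp_mem_of_eLpNorm_le_of_ae_tendsto (Submodule.isClosed_topologicalClosure _) hmem hF
    ?_ hC hbound ?_
  · filter_upwards [eventually_tsupport_mollify_subset (μ := volume) hfc hV hfV] with n hn
    exact Submodule.le_topologicalClosure _
      (toLp_mem_smoothPairs (hsmooth n) (hasCompactSupport_mollify n hfc) hn _)
  · filter_upwards [ae_tendsto_mollify hf.1, ae_tendsto_mollify hf.2.1] with x hfx hgfx
    simp only [hf.gradient_mollify]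
    exact tendsto_weightedPair hfx hgfx

theorem HasWeakGrad.toLp_mem_closure_smoothPairs {w f : 𝔼 → ℝ} {gw gf : 𝔼 → 𝔼}
    (hw : HasWeakGrad w gw) (hgw : Integrable gw) (hw₂ : MemLp w 2) (hgw₂ : MemLp gw 2)
    (hf : HasWeakGrad f gf) (hgf : Integrable gf) (hfc : HasCompactSupport f) {V : Set 𝔼}
    (hV : IsOpen V) (hfV : tsupport f ⊆ V) (hF : MemLp (weightedPair w f gf) 2 volume) :
    hF.toLp ∈ (smoothPairs w V).topologicalClosure := by
  obtain ⟨hwf, hwgf⟩ := memLp_weightedPair.1 hF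
  have htrunc : ∀ n, HasWeakGrad _ _ := fun n => hf.truncate hgf n
  have hsupp : ∀ n, Function.support (fun x => sinTruncate n (f x)) ⊆ Function.support f :=
    fun n => Function.support_comp_subset (g := sinTruncate n) (by simp [sinTruncate]) f
  have hwF : ∀ n x, ‖w x * sinTruncate n (f x)‖ ≤ ‖w x * f x‖ := fun n x => by
    rw [norm_mul, norm_mul]
    exact mul_le_mul_of_nonneg_left (abs_sinTruncate_le_abs n _) (norm_nonneg _)
  have hwG : ∀ n x, ‖w x • deriv (sinTruncate n) (f x) • gf x‖ ≤ ‖w x • gf x‖ := fun n x => by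
    rw [smul_comm]
    exact norm_deriv_sinTruncate_smul_le n _ _
  have hmem : ∀ n, MemLp (weightedPair w (fun x => sinTruncate n (f x))
      fun x => deriv (sinTruncate n) (f x) • gf x) 2 := fun n => memLp_weightedPair.2
    ⟨hwf.of_le (hw₂.1.mul (htrunc n).1.aestronglyMeasurable) (.of_forall (hwF n)),
      hwgf.of_le (hw₂.1.smul (htrunc n).2.1.aestronglyMeasurable) (.of_forall (hwG n))⟩
  refine toLp_mem_of_eLpNorm_le_of_ae_tendsto (Submodule.isClosed_topologicalClosure _) hmem hF
    (.of_forall fun n => ?_) (ENNReal.add_ne_top.2 ⟨hwf.2.ne, hwgf.2.ne⟩) (fun n =>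
      (eLpNorm_weightedPair_le (memLp_weightedPair.1 (hmem n)).1.1
        (memLp_weightedPair.1 (hmem n)).2.1 one_le_two).trans
      (add_le_add (eLpNorm_mono (hwF n)) (eLpNorm_mono (hwG n)))) ?_
  · exact hw.toLp_mem_closure_smoothPairs_of_bounded hgw hw₂ hgw₂ (htrunc n)
      (hgf.mono (htrunc n).2.1.aestronglyMeasurable
        (.of_forall fun x => norm_deriv_sinTruncate_smul_le n _ _))
      (hfc.mono (hsupp n)) hV ((closure_mono (hsupp n)).trans hfV)
      (fun x => abs_sinTruncate_le n _) (hmem n)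
  · refine .of_forall fun x => tendsto_weightedPair (tendsto_sinTruncate _) ?_
    simpa only [one_smul] using (tendsto_deriv_sinTruncate (f x)).smul_const (gf x)

theorem exists_contDiff_one_nhdsSet {E : Type*} [NormedAddCommGroup E] [NormedSpace ℝ E]
    [FiniteDimensional ℝ E] {K U : Set E} (hK : IsCompact K) (hU : IsOpen U) (hKU : K ⊆ U) :
    ∃ θ : E → ℝ, ContDiff ℝ ∞ θ ∧ HasCompactSupport θ ∧ tsupport θ ⊆ U ∧
      ∀ᶠ x in 𝓝ˢ K, θ x = 1 := by
  obtain ⟨L, hL, hKL, hLU⟩ := exists_compact_between hK hU hKU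
  obtain ⟨θ, hθK, hθL, -⟩ := exists_contMDiffMap_one_nhds_of_subset_interior
    (modelWithCornersSelf ℝ E) (n := (⊤ : ℕ∞)) hK.isClosed hKL
  have hsupp : tsupport θ ⊆ L :=
    closure_minimal (fun x hx => not_imp_comm.1 (hθL x) hx) hL.isClosed
  exact ⟨θ, θ.contMDiff.contDiff, hL.of_isClosed_subset (isClosed_tsupport _) hsupp,
    hsupp.trans hLU, hθK⟩

theorem exists_seq_isCompact_mem_nhds {X : Type*} [TopologicalSpace X] [LocallyCompactSpace X]
    [SecondCountableTopology X] {O : Set X} (hO : IsOpen O) :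
    ∃ K : ℕ → Set X, (∀ n, IsCompact (K n)) ∧ (∀ n, K n ⊆ O) ∧ ∀ x ∈ O, ∃ n, K n ∈ 𝓝 x := by
  have := hO.locallyCompactSpace
  let C := CompactExhaustion.choice O
  refine ⟨fun n => (↑) '' C n, fun n => (C.isCompact n).image continuous_subtype_val,
    fun n => Subtype.coe_image_subset O _, fun x hx => ?_⟩
  obtain ⟨n, hn⟩ := C.exists_mem_nhds ⟨x, hx⟩
  exact ⟨n, hO.isOpenMap_subtype_val.image_mem_nhds hn⟩

theorem exists_seq_contDiff_partition {E : Type*} [NormedAddCommGroup E] [NormedSpace ℝ E]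
    [FiniteDimensional ℝ E] {O : Set E} (hO : IsOpen O) :
    ∃ (η : ℕ → E → ℝ) (V : ℕ → Set E), (∀ n, ContDiff ℝ ∞ (η n)) ∧
      (∀ n, HasCompactSupport (η n)) ∧ (∀ n, tsupport (η n) ⊆ V n) ∧
      (∀ n, IsOpen (V n)) ∧ (∀ n, V n ⊆ O) ∧ ∀ x ∈ O, ∀ᶠ N in atTop, ∀ᶠ y in 𝓝 x,
        ∑ n ∈ Finset.range N, η n y = 1 ∧ ∀ n ≥ N, y ∉ V n := by
  obtain ⟨K, hK, hKO, hKx⟩ := exists_seq_isCompact_mem_nhds hO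
  choose χ hχ hχc hχO hχK using fun n => exists_contDiff_one_nhdsSet (hK n) hO (hKO n)
  refine ⟨fun n x => χ n x * ∏ k ∈ Finset.range n, (1 - χ k x),
    fun n => O \ ⋃ k ∈ Finset.range n, K k,
    fun n => (hχ n).mul (contDiff_prod fun k _ => contDiff_const.sub (hχ k)),
    fun n => (hχc n).mul_right, fun n x hx => ⟨hχO n (tsupport_mul_subset_left hx), fun hxK => ?_⟩,
    fun n => hO.sdiff (isClosed_biUnion_finset fun k _ => (hK k).isClosed), fun n => sdiff_subset,
    fun x hx => ?_⟩
  · obtain ⟨k, hk, hxk⟩ := mem_iUnion₂.1 hxK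
    refine notMem_tsupport_iff_eventuallyEq.2 ?_ hx
    filter_upwards [eventually_nhdsSet_iff_forall.1 (hχK k) x hxk] with y hy
    exact mul_eq_zero_of_right _ (Finset.prod_eq_zero hk (by rw [hy, sub_self]))
  · obtain ⟨k, hk⟩ := hKx x hx
    filter_upwards [eventually_gt_atTop k] with N hN
    filter_upwards [hk] with y hy
    refine ⟨?_, fun n hn hyV => hyV.2 (mem_iUnion₂.2 ⟨k, Finset.mem_range.2 (hN.trans_le hn), hy⟩)⟩
    have hprod : ∏ k ∈ Finset.range N, (1 - χ k y) = 0 := Finset.prod_eq_zero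
      (Finset.mem_range.2 hN) (by rw [(hχK k).self_of_nhdsSet y hy, sub_self])
    rw [Finset.prod_one_sub_ordered, sub_eq_zero] at hprod
    refine (Finset.sum_congr rfl fun n hn => ?_).trans hprod.symm
    congr 2
    ext k
    simp only [Finset.mem_range, Finset.mem_filter] at hn ⊢
    omega

theorem HasWeakGrad.exists_eLpNorm_weightedPair_sub_lt {w f : 𝔼 → ℝ} {gw gf : 𝔼 → 𝔼}
    (hw : HasWeakGrad w gw) (hgw : Integrable gw) (hw₂ : MemLp w 2) (hgw₂ : MemLp gw 2)
    (hf : HasWeakGrad f gf) (hgf : Integrable gf) (hfc : HasCompactSupport f) {V : Set 𝔼}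
    (hV : IsOpen V) (hfV : tsupport f ⊆ V) (hF : MemLp (weightedPair w f gf) 2 volume)
    {δ : ENNReal} (hδ : δ ≠ 0) :
    ∃ ψ : 𝔼 → ℝ, ContDiff ℝ ∞ ψ ∧ HasCompactSupport ψ ∧ tsupport ψ ⊆ V ∧
      eLpNorm (weightedPair w (fun x => f x - ψ x) fun x => gf x - gradient ψ x) 2 volume < δ := by
  obtain ⟨u, ⟨ψ, hψ, hψc, hψV, hu⟩, hFu⟩ := EMetric.mem_closure_iff.1
    (hw.toLp_mem_closure_smoothPairs hgw hw₂ hgw₂ hf hgf hfc hV hfV hF) δ (pos_iff_ne_zero.2 hδ)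
  refine ⟨ψ, hψ, hψc, hψV, ?_⟩
  rw [Lp.edist_def, eLpNorm_congr_ae (hF.coeFn_toLp.sub hu)] at hFu
  convert hFu using 2
  ext1 x
  simp only [weightedPair, Pi.sub_apply, mul_sub, smul_sub]
  rfl

theorem memLp_two_of_norm_le_mul {O : Set 𝔼} (hO : IsOpen O) {F G H : Type*}
    [NormedAddCommGroup F] [NormedAddCommGroup G] [NormedAddCommGroup H] {u : 𝔼 → F}
    (hu : LocallyIntegrableOn (fun x => ‖u x‖ ^ 2) O) {η : 𝔼 → G} (hη : Continuous η)
    (hηc : HasCompactSupport η) (hηO : tsupport η ⊆ O) {z : 𝔼 → H}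
    (hz : AEStronglyMeasurable z) (hzu : ∀ x, ‖z x‖ ≤ ‖η x‖ * ‖u x‖) : MemLp z 2 := by
  have hsupp : Function.support (fun x => ‖η x‖ ^ 2) ⊆ Function.support η := fun x hx hx₀ =>
    hx (by simp [hx₀])
  have hint : Integrable fun x => ‖η x‖ ^ 2 • ‖u x‖ ^ 2 := integrable_of_hasCompactSupport
    (locallyIntegrable_smul_of_tsupport_subset hO hu (hη.norm.pow 2)
      ((closure_mono hsupp).trans hηO)) ((hηc.mono hsupp).smul_right (f' := fun x => ‖u x‖ ^ 2))
  refine (memLp_two_iff_integrable_sq_norm hz).2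
    (hint.mono' (hz.norm.pow 2) (.of_forall fun x => ?_))
  rw [norm_pow, norm_norm, smul_eq_mul, ← mul_pow]
  exact pow_le_pow_left₀ (norm_nonneg _) (hzu x) 2

theorem HasWeakGradOn.integrable_smul {O : Set 𝔼} (hO : IsOpen O) {f : 𝔼 → ℝ} {g : 𝔼 → 𝔼}
    (h : HasWeakGradOn O f g) {η : 𝔼 → ℝ} (hη : ContDiff ℝ ∞ η) (hηc : HasCompactSupport η)
    (hηO : tsupport η ⊆ O) : Integrable fun x => η x • g x + f x • gradient η x :=
  integrable_of_hasCompactSupport (h.smul_of_tsupport_subset hO hη hηO).2.1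
    ((hηc.smul_right (f' := g)).add ((hasCompactSupport_gradient hηc).smul_left (f := f)))

theorem HasWeakGradOn.memLp_two_smul {O : Set 𝔼} (hO : IsOpen O) {f : 𝔼 → ℝ} {g : 𝔼 → 𝔼}
    (h : HasWeakGradOn O f g) (hf₂ : LocallyIntegrableOn (fun x => ‖f x‖ ^ 2) O)
    (hg₂ : LocallyIntegrableOn (fun x => ‖g x‖ ^ 2) O) {η : 𝔼 → ℝ} (hη : ContDiff ℝ ∞ η)
    (hηc : HasCompactSupport η) (hηO : tsupport η ⊆ O) :
    MemLp (fun x => η x * f x) 2 ∧ MemLp (fun x => η x • g x + f x • gradient η x) 2 := by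
  have hη₁ : ContDiff ℝ 1 η := hη.of_le (by simp)
  refine ⟨memLp_two_of_norm_le_mul hO hf₂ hη.continuous hηc hηO
    (locallyIntegrable_smul_of_tsupport_subset hO h.1 hη.continuous hηO).aestronglyMeasurable
    fun x => (norm_mul _ _).le, .add ?_ ?_⟩
  · exact memLp_two_of_norm_le_mul hO hg₂ hη.continuous hηc hηO
      (locallyIntegrable_smul_of_tsupport_subset hO h.2.1 hη.continuous hηO).aestronglyMeasurable
      fun x => (norm_smul _ _).le
  · exact memLp_two_of_norm_le_mul hO hf₂ (continuous_gradient hη₁) (hasCompactSupport_gradient hηc)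
      ((tsupport_gradient_subset η).trans hηO)
      (locallyIntegrable_smul_gradient hO h.1 hη₁ hηO).aestronglyMeasurable
      fun x => by rw [norm_smul, mul_comm]

theorem HasWeakGradOn.memLp_weightedPair_smul {O : Set 𝔼} (hO : IsOpen O) {w f : 𝔼 → ℝ}
    {gf : 𝔼 → 𝔼} (hw : LocallyIntegrableOn w O) (hf : HasWeakGradOn O f gf)
    (hwf : LocallyIntegrableOn (fun x => ‖w x * f x‖ ^ 2) O)
    (hwgf : LocallyIntegrableOn (fun x => ‖w x • gf x‖ ^ 2) O) {θ η : 𝔼 → ℝ}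
    (hθ : Continuous θ) (hθc : HasCompactSupport θ) (hθO : tsupport θ ⊆ O)
    (hη : ContDiff ℝ ∞ η) (hηO : tsupport η ⊆ O) :
    MemLp (weightedPair (fun x => θ x * w x) (fun x => η x * f x)
      fun x => η x • gf x + f x • gradient η x) 2 volume := by
  have hη₁ : ContDiff ℝ 1 η := hη.of_le (by simp)
  have hθw := (locallyIntegrable_smul_of_tsupport_subset hO hw hθ hθO).aestronglyMeasurable
  have hηf := locallyIntegrable_smul_of_tsupport_subset hO hf.1 hη.continuous hηO
  have hηgf := locallyIntegrable_smul_of_tsupport_subset hO hf.2.1 hη.continuous hηO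
  have hfη := locallyIntegrable_smul_gradient hO hf.1 hη₁ hηO
  have hsplit : ∀ x, (θ x * w x) • (η x • gf x + f x • gradient η x) =
      (θ x * w x) • η x • gf x + (θ x * w x) • f x • gradient η x := fun x => smul_add _ _ _
  simp only [memLp_weightedPair, hsplit]
  refine ⟨memLp_two_of_norm_le_mul hO hwf (hθ.mul hη.continuous) hθc.mul_right
    (tsupport_mul_subset_left.trans hθO) (hθw.mul hηf.aestronglyMeasurable) fun x => ?_,
    .add (memLp_two_of_norm_le_mul hO hwgf (hθ.mul hη.continuous) hθc.mul_right
      (tsupport_mul_subset_left.trans hθO) (hθw.smul hηgf.aestronglyMeasurable) fun x => ?_)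
    (memLp_two_of_norm_le_mul hO hwf (hθ.smul (continuous_gradient hη₁)) hθc.smul_right
      ((tsupport_smul_subset_left _ _).trans hθO)
      (hθw.smul hfη.aestronglyMeasurable) fun x => ?_)⟩ <;>
  · simp only [norm_mul, norm_smul, Pi.smul_apply', Pi.mul_apply]
    exact le_of_eq (by ring)

theorem HasWeakGradOn.exists_eLpNorm_weightedPair_smul_sub_lt {O : Set 𝔼} (hO : IsOpen O)
    {w f : 𝔼 → ℝ} {gw gf : 𝔼 → 𝔼} (hw : HasWeakGradOn O w gw)
    (hw₂ : LocallyIntegrableOn (fun x => ‖w x‖ ^ 2) O)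
    (hgw₂ : LocallyIntegrableOn (fun x => ‖gw x‖ ^ 2) O) (hf : HasWeakGradOn O f gf)
    (hwf : LocallyIntegrableOn (fun x => ‖w x * f x‖ ^ 2) O)
    (hwgf : LocallyIntegrableOn (fun x => ‖w x • gf x‖ ^ 2) O) {η : 𝔼 → ℝ} (hη : ContDiff ℝ ∞ η)
    (hηc : HasCompactSupport η) {V : Set 𝔼} (hV : IsOpen V) (hVO : V ⊆ O) (hηV : tsupport η ⊆ V)
    {δ : ENNReal} (hδ : δ ≠ 0) :
    ∃ ψ : 𝔼 → ℝ, ContDiff ℝ ∞ ψ ∧ tsupport ψ ⊆ V ∧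
      eLpNorm (weightedPair w (fun x => η x * f x - ψ x)
        fun x => η x • gf x + f x • gradient η x - gradient ψ x) 2 volume < δ := by
  have hηO := hηV.trans hVO
  obtain ⟨θ, hθ, hθc, hθO, hθη⟩ := exists_contDiff_one_nhdsSet hηc hO hηO
  obtain ⟨W, hW, hηW, hWθ⟩ := mem_nhdsSet_iff_exists.1 hθη
  have hθw := hw.smul_of_tsupport_subset hO hθ hθO
  have hηf := hf.smul_of_tsupport_subset hO hη hηO
  obtain ⟨hθw₂, hgθw₂⟩ := hw.memLp_two_smul hO hw₂ hgw₂ hθ hθc hθO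
  obtain ⟨ψ, hψ, -, hψV, hlt⟩ := hθw.exists_eLpNorm_weightedPair_sub_lt
    (hw.integrable_smul hO hθ hθc hθO) hθw₂ hgθw₂ hηf (hf.integrable_smul hO hη hηc hηO)
    hηc.mul_right (hV.inter hW)
    (tsupport_mul_subset_left.trans (subset_inter hηV hηW))
    (hf.memLp_weightedPair_smul hO hw.1 hwf hwgf hθ.continuous hθc hθO hη hηO) hδ
  refine ⟨ψ, hψ, hψV.trans inter_subset_left, hlt.trans_eq' (congrArg (eLpNorm · 2 volume) ?_)⟩
  ext1 x
  by_cases hx : x ∈ W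
  · rw [weightedPair, weightedPair, show θ x = 1 from hWθ hx, one_mul]
  · have hxη : x ∉ tsupport η := fun h => hx (hηW h)
    have hxψ : x ∉ tsupport ψ := fun h => hx (hψV h).2
    simp [weightedPair, image_eq_zero_of_notMem_tsupport hxη,
      image_eq_zero_of_notMem_tsupport hxψ,
      image_eq_zero_of_notMem_tsupport fun h => hxη (tsupport_gradient_subset η h),
      image_eq_zero_of_notMem_tsupport fun h => hxψ (tsupport_gradient_subset ψ h)]

theorem gradient_sum {ι : Type*} {s : Finset ι} {ψ : ι → 𝔼 → ℝ} {x : 𝔼}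
    (hψ : ∀ i ∈ s, DifferentiableAt ℝ (ψ i) x) :
    gradient (fun y => ∑ i ∈ s, ψ i y) x = ∑ i ∈ s, gradient (ψ i) x := by
  simp only [gradient, fderiv_fun_sum hψ, map_sum]

theorem weightedPair_sub_eq_sum {ι : Type*} {s : Finset ι} (w f : 𝔼 → ℝ) (gf : 𝔼 → 𝔼)
    {η ψ : ι → 𝔼 → ℝ} {Ψ : 𝔼 → ℝ} {x : 𝔼} (hη : ∀ i ∈ s, DifferentiableAt ℝ (η i) x)
    (hψ : ∀ i ∈ s, DifferentiableAt ℝ (ψ i) x) (hη₁ : ∀ᶠ y in 𝓝 x, ∑ i ∈ s, η i y = 1)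
    (hΨ : Ψ =ᶠ[𝓝 x] fun y => ∑ i ∈ s, ψ i y) :
    weightedPair w (fun y => f y - Ψ y) (fun y => gf y - gradient Ψ y) x =
      ∑ i ∈ s, weightedPair w (fun y => η i y * f y - ψ i y)
        (fun y => η i y • gf y + f y • gradient (η i) y - gradient (ψ i) y) x := by
  have hgradΨ : gradient Ψ x = ∑ i ∈ s, gradient (ψ i) x := by
    rw [← gradient_sum hψ, gradient, hΨ.fderiv_eq, gradient]
  have hgradη : ∑ i ∈ s, gradient (η i) x = 0 := by
    rw [← gradient_sum hη, gradient, EventuallyEq.fderiv_eq (f := fun _ => (1 : ℝ)) hη₁,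
      fderiv_const_apply, map_zero]
  have hvalue : f x - Ψ x = ∑ i ∈ s, (η i x * f x - ψ i x) := by
    rw [Finset.sum_sub_distrib, ← Finset.sum_mul, hη₁.self_of_nhds, one_mul, hΨ.self_of_nhds]
  have hgrad : gf x - gradient Ψ x =
      ∑ i ∈ s, (η i x • gf x + f x • gradient (η i) x - gradient (ψ i) x) := by
    rw [Finset.sum_sub_distrib, Finset.sum_add_distrib, ← Finset.sum_smul, ← Finset.smul_sum,
      hη₁.self_of_nhds, hgradη, hgradΨ, one_smul, smul_zero, add_zero]
  simp only [weightedPair, hvalue, hgrad, Finset.mul_sum, Finset.smul_sum]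
  rw [prod_mk_sum, WithLp.toLp_sum]

theorem eLpNorm_le_tsum_of_eventually_eq_sum {α F : Type*} [MeasurableSpace α] {μ : Measure α}
    [NormedAddCommGroup F] {p : ENNReal} (hp : 1 ≤ p) {D : ℕ → α → F} {u : α → F}
    (hD : ∀ n, AEStronglyMeasurable (D n) μ)
    (hu : ∀ᵐ x ∂μ, ∀ᶠ N in atTop, u x = ∑ n ∈ Finset.range N, D n x) :
    eLpNorm u p μ ≤ ∑' n, eLpNorm (D n) p μ := by
  refine (Lp.eLpNorm_lim_le_liminf_eLpNorm
    (fun N => Finset.aestronglyMeasurable_sum (Finset.range N) fun n _ => hD n) u ?_).trans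
    (liminf_le_of_le ⟨0, by simp⟩ fun b hb => ?_)
  · filter_upwards [hu] with x hx
    simp only [Finset.sum_apply]
    exact tendsto_const_nhds.congr' hx
  · obtain ⟨N, hN⟩ := hb.exists
    exact hN.trans ((eLpNorm_sum_le (fun n _ => hD n) hp).trans (ENNReal.sum_le_tsum _))

theorem HasWeakGradOn.exists_contDiffOn_eLpNorm_weightedPair_sub_lt {O : Set 𝔼} (hO : IsOpen O)
    {w f : 𝔼 → ℝ} {gw gf : 𝔼 → 𝔼} (hw : HasWeakGradOn O w gw)
    (hw₂ : LocallyIntegrableOn (fun x => ‖w x‖ ^ 2) O)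
    (hgw₂ : LocallyIntegrableOn (fun x => ‖gw x‖ ^ 2) O) (hf : HasWeakGradOn O f gf)
    (hwf : LocallyIntegrableOn (fun x => ‖w x * f x‖ ^ 2) O)
    (hwgf : LocallyIntegrableOn (fun x => ‖w x • gf x‖ ^ 2) O) {δ : ENNReal} (hδ : δ ≠ 0) :
    ∃ ψ : 𝔼 → ℝ, ContDiffOn ℝ ∞ ψ O ∧ eLpNorm (weightedPair w (fun x => f x - ψ x)
      fun x => gf x - gradient ψ x) 2 (volume.restrict O) < δ := by
  obtain ⟨η, V, hη, hηc, hηV, hV, hVO, hloc⟩ := exists_seq_contDiff_partition hO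
  obtain ⟨ε, hε, hεδ⟩ := ENNReal.exists_pos_sum_of_countable' hδ ℕ
  choose ψ hψ hψV hψε using fun n => hw.exists_eLpNorm_weightedPair_smul_sub_lt hO hw₂ hgw₂ hf hwf
    hwgf (hη n) (hηc n) (hV n) (hVO n) (hηV n) (hε n).ne'
  have hψ₁ : ∀ n, ContDiff ℝ 1 (ψ n) := fun n => (hψ n).of_le (by simp)
  have hη₁ : ∀ n, ContDiff ℝ 1 (η n) := fun n => (hη n).of_le (by simp)
  have hsum : ∀ x ∈ O, ∀ᶠ N in atTop,
      (fun y => ∑' n, ψ n y) =ᶠ[𝓝 x] fun y => ∑ n ∈ Finset.range N, ψ n y := fun x hx => by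
    filter_upwards [hloc x hx] with N hN
    filter_upwards [hN] with y hy
    exact tsum_eq_sum fun n hn => image_eq_zero_of_notMem_tsupport fun h =>
      hy.2 n (by simpa using hn) (hψV n h)
  refine ⟨fun x => ∑' n, ψ n x, fun x hx => ?_, ?_⟩
  · obtain ⟨N, hN⟩ := (hsum x hx).exists
    exact ((ContDiff.sum fun n _ => hψ n).contDiffAt.congr_of_eventuallyEq hN).contDiffWithinAt
  refine (eLpNorm_le_tsum_of_eventually_eq_sum one_le_two (fun n => ?_)
    (ae_restrict_of_forall_mem hO.measurableSet fun x hx => ?_)).trans_lt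
    ((ENNReal.tsum_le_tsum fun n =>
      (eLpNorm_mono_measure _ Measure.restrict_le_self).trans (hψε n).le).trans_lt hεδ)
  · exact aestronglyMeasurable_weightedPair hw.1.aestronglyMeasurable
      (((hη n).continuous.aestronglyMeasurable.mul hf.1.aestronglyMeasurable).sub
        (hψ n).continuous.aestronglyMeasurable)
      ((((hη n).continuous.aestronglyMeasurable.smul hf.2.1.aestronglyMeasurable).add
        (hf.1.aestronglyMeasurable.smul (continuous_gradient (hη₁ n)).aestronglyMeasurable)).sub
        (continuous_gradient (hψ₁ n)).aestronglyMeasurable)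
  · filter_upwards [hloc x hx, hsum x hx] with N hN hΨ
    exact weightedPair_sub_eq_sum w f gf (fun n _ => (hη₁ n).differentiable one_ne_zero x)
      (fun n _ => (hψ₁ n).differentiable one_ne_zero x) (hN.mono fun y hy => hy.1) hΨ

theorem lintegral_add_lintegral_le_eLpNorm_weightedPair_sq {μ : Measure 𝔼} {m : 𝔼 → ℝ}
    (hm : ∀ x, 0 ≤ m x) (f : 𝔼 → ℝ) (g : 𝔼 → 𝔼) :
    (∫⁻ x, ENNReal.ofReal (f x ^ 2 * m x) ∂μ) + ∫⁻ x, ENNReal.ofReal (‖g x‖ ^ 2 * m x) ∂μ ≤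
      eLpNorm (weightedPair (fun x => √(m x)) f g) 2 μ ^ 2 := by
  have hpair : eLpNorm (weightedPair (fun x => √(m x)) f g) 2 μ ^ 2 =
      ∫⁻ x, ‖weightedPair (fun x => √(m x)) f g x‖ₑ ^ 2 ∂μ := by
    simpa only [ENNReal.coe_ofNat, NNReal.coe_ofNat, ENNReal.rpow_ofNat] using
      eLpNorm_nnreal_pow_eq_lintegral (p := 2) (μ := μ)
        (f := weightedPair (fun x => √(m x)) f g) two_ne_zero
  rw [hpair]
  refine (le_lintegral_add _ _).trans (lintegral_mono fun x => ?_)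
  rw [← ofReal_norm, ← ENNReal.ofReal_pow (norm_nonneg _), norm_weightedPair_sq,
    Real.sq_sqrt (hm x), ENNReal.ofReal_add (mul_nonneg (sq_nonneg _) (hm x))
      (mul_nonneg (sq_nonneg _) (hm x))]

theorem weighted_H12_eq_W12_general {O : Set 𝔼} (hO : IsOpen O) {m : 𝔼 → ℝ}
    (hm : ∀ x, 0 ≤ m x) {gs : 𝔼 → 𝔼} (hs : HasWeakGradOn O (fun x => √(m x)) gs)
    (hm₁ : LocallyIntegrableOn m O) (hgs : LocallyIntegrableOn (fun x => ‖gs x‖ ^ 2) O)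
    {f : 𝔼 → ℝ} {gf : 𝔼 → 𝔼} (hf : HasWeakGradOn O f gf)
    (hfm : LocallyIntegrableOn (fun x => f x ^ 2 * m x) O)
    (hgfm : LocallyIntegrableOn (fun x => ‖gf x‖ ^ 2 * m x) O) :
    ∃ ψ : ℕ → 𝔼 → ℝ, (∀ i, ContDiffOn ℝ ∞ (ψ i) O) ∧
      Tendsto (fun i => (∫⁻ x in O, ENNReal.ofReal ((f x - ψ i x) ^ 2 * m x)) +
        ∫⁻ x in O, ENNReal.ofReal (‖gf x - gradient (ψ i) x‖ ^ 2 * m x)) atTop (𝓝 0) := by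
  have hw₂ : LocallyIntegrableOn (fun x => ‖√(m x)‖ ^ 2) O := by
    simpa only [Real.norm_eq_abs, sq_abs, Real.sq_sqrt (hm _)] using hm₁
  have hwf : LocallyIntegrableOn (fun x => ‖√(m x) * f x‖ ^ 2) O := by
    simpa only [Real.norm_eq_abs, sq_abs, mul_pow, Real.sq_sqrt (hm _), mul_comm] using hfm
  have hwgf : LocallyIntegrableOn (fun x => ‖√(m x) • gf x‖ ^ 2) O := by
    simpa only [norm_smul, Real.norm_eq_abs, sq_abs, mul_pow, Real.sq_sqrt (hm _), mul_comm]
      using hgfm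
  choose ψ hψ hψδ using fun i : ℕ => hs.exists_contDiffOn_eLpNorm_weightedPair_sub_lt hO hw₂ hgs hf
    hwf hwgf (ENNReal.inv_ne_zero.2 (ENNReal.natCast_ne_top i))
  have hlim : Tendsto (fun i : ℕ => ((i : ENNReal)⁻¹) ^ 2) atTop (𝓝 0) := by
    simpa using ENNReal.Tendsto.pow (n := 2) ENNReal.tendsto_inv_nat_nhds_zero
  exact ⟨ψ, hψ, tendsto_of_tendsto_of_tendsto_of_le_of_le tendsto_const_nhds hlim
    (fun _ => zero_le) fun i => (lintegral_add_lintegral_le_eLpNorm_weightedPair_sq hm _ _).trans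
      (pow_le_pow_left' (hψδ i).le 2)⟩

end WeakGradients

/-- Lemma `le:spaces` of the paper: if `m ∈ W^{1,1}_loc(ℝᵈ)` and `√m ∈ W^{1,2}(O)`,
where `O` is `ℝᵈ` or an open ball, then every function of the weighted Sobolev class
`W^{1,2}(O, m dx)` can be approximated in the weighted norm by smooth functions,
i.e. `H^{1,2}(O, m dx) = W^{1,2}(O, m dx)`. -/
theorem weighted_H12_eq_W12 (d : ℕ)
    (O : Set (EuclideanSpace ℝ (Fin d)))
    (hO : O = Set.univ ∨ ∃ (x₀ : EuclideanSpace ℝ (Fin d)) (r : ℝ), 0 < r ∧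
      O = Metric.ball x₀ r)
    (m : EuclideanSpace ℝ (Fin d) → ℝ)
    (hm_meas : Measurable m) (hm_nonneg : ∀ x, 0 ≤ m x)
    (hmW11 : ∃ gm, HasWeakGrad m gm)
    (hsq : ∃ gs, HasWeakGradOn O (fun x => Real.sqrt (m x)) gs ∧
      IntegrableOn (fun x => (Real.sqrt (m x)) ^ 2) O volume ∧
      IntegrableOn (fun x => ‖gs x‖ ^ 2) O volume) :
    ∀ (f : EuclideanSpace ℝ (Fin d) → ℝ)
      (gf : EuclideanSpace ℝ (Fin d) → EuclideanSpace ℝ (Fin d)),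
      HasWeakGradOn O f gf →
      IntegrableOn (fun x => f x ^ 2 * m x) O volume →
      IntegrableOn (fun x => ‖gf x‖ ^ 2 * m x) O volume →
      ∃ ψ : ℕ → EuclideanSpace ℝ (Fin d) → ℝ,
        (∀ i, ContDiffOn ℝ (⊤ : ℕ∞) (ψ i) O) ∧
        Tendsto (fun i =>
          (∫⁻ x in O, ENNReal.ofReal ((f x - ψ i x) ^ 2 * m x)) +
          ∫⁻ x in O, ENNReal.ofReal (‖gf x - gradient (ψ i) x‖ ^ 2 * m x))
          atTop (nhds 0) := by
  obtain ⟨gs, hs, hm₁, hgs⟩ := hsq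
  exact fun f gf hf hfm hgfm => weighted_H12_eq_W12_general
    (hO.elim (· ▸ isOpen_univ) fun ⟨_, _, _, h⟩ => h ▸ Metric.isOpen_ball) hm_nonneg hs
    (by simpa only [Real.sq_sqrt (hm_nonneg _)] using hm₁.locallyIntegrableOn)
    hgs.locallyIntegrableOn hf hfm.locallyIntegrableOn hgfm.locallyIntegrableOn
end

section
/- Let n ∈ ℕ and let X = (X_s, s ∈ ℝ₊) be a continuous function from ℝ₊ to ℝⁿ. Suppose there exist a constant K ≥ 0 and locally integrable functions F : ℝ₊ → ℝⁿ and ρ : ℝ₊ → [0,∞) such that for every t > 0, every finite partition 0 = t₀ < t₁ < … < t_k, and all vectors λ₁, …, λ_k ∈ ℝⁿ, Σ_{j=1}^k λ_j·(X_{t∧t_j} − X_{t∧t_{j−1}}) ≤ ∫₀ᵗ λ(s)·F(s) ds + √(2K) ( ∫₀ᵗ |λ(s)|² ρ(s) ds )^{1/2}, where λ(s) = Σ_{j=1}^k λ_j 1_{[t_{j−1}, t_j)}(s). Then X is absolutely continuous with respect to Lebesgue measure on every compact interval of ℝ₊ (in particular X is a.e. differentiable with locally integrable derivative). -/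
open MeasureTheory Filter Set Topology RealInnerProductSpace

/-! Testing the bound with the step function whose values are the unit vectors along the increments
of `X` over disjoint intervals `[a i, b i)` of union `U` gives
`∑ ‖X (b i) - X (a i)‖ ≤ ∫_U ‖F‖ + √(2K) (∫_U ρ)^{1/2}`, and the right-hand side vanishes with the
Lebesgue measure of `U`. -/

section AbsolutelyContinuous

variable {a b : ℝ}

lemma tendsto_setIntegral_biUnion_uIoc_nhds_zero {G : Type*} [NormedAddCommGroup G]
    [NormedSpace ℝ G] {g : ℝ → G} (hg : IntegrableOn g (uIoc a b)) :
    Tendsto (fun I : ℕ × (ℕ → ℝ × ℝ) =>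
        ∫ r in ⋃ i ∈ Finset.range I.1, uIoc (I.2 i).1 (I.2 i).2, g r ∂volume.restrict (uIoc a b))
      (AbsolutelyContinuousOnInterval.totalLengthFilter ⊓
        𝓟 (AbsolutelyContinuousOnInterval.disjWithin a b)) (𝓝 0) :=
  Integrable.tendsto_setIntegral_nhds_zero hg <|
    AbsolutelyContinuousOnInterval.tendsto_volume_restrict_totalLengthFilter_disjWithin_nhds_zero
      a b

lemma absolutelyContinuousOnInterval_comp_of_lipschitzWith {Y Z : Type*} [PseudoMetricSpace Y]
    [PseudoMetricSpace Z] {K : NNReal} {g : Y → Z} {f : ℝ → Y} (hg : LipschitzWith K g)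
    (hf : AbsolutelyContinuousOnInterval f a b) :
    AbsolutelyContinuousOnInterval (g ∘ f) a b := by
  have hlim := Tendsto.const_mul (K : ℝ) hf
  rw [mul_zero] at hlim
  refine squeeze_zero (fun _ => Finset.sum_nonneg fun _ _ => dist_nonneg) (fun I => ?_) hlim
  rw [Finset.mul_sum]
  exact Finset.sum_le_sum fun i _ => hg.dist_le_mul _ _

variable {E : Type*} [NormedAddCommGroup E] [NormedSpace ℝ E] [FiniteDimensional ℝ E] {f : ℝ → E}

lemma ae_deriv_clm_comp_eq_of_absolutelyContinuousOnInterval {E' : Type*} [NormedAddCommGroup E']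
    [NormedSpace ℝ E'] (ℓ : E →L[ℝ] E') (hf : AbsolutelyContinuousOnInterval f a b) :
    ∀ᵐ x, x ∈ uIoc a b → deriv (ℓ ∘ f) x = ℓ (deriv f x) := by
  filter_upwards [hf.boundedVariationOn.ae_differentiableAt_of_mem_uIcc] with x hx hxab
  exact (ℓ.hasFDerivAt.comp_hasDerivAt x (hx (uIoc_subset_uIcc hxab)).hasDerivAt).deriv

lemma intervalIntegrable_deriv_of_absolutelyContinuousOnInterval
    (hf : AbsolutelyContinuousOnInterval f a b) : IntervalIntegrable (deriv f) volume a b := by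
  have hdual (ℓ : E →L[ℝ] ℝ) : IntervalIntegrable (fun x => ℓ (deriv f x)) volume a b := by
    have hℓf := absolutelyContinuousOnInterval_comp_of_lipschitzWith ℓ.lipschitz hf
    exact hℓf.intervalIntegrable_deriv.congr_ae <| (ae_restrict_iff' measurableSet_uIoc).2 <|
      ae_deriv_clm_comp_eq_of_absolutelyContinuousOnInterval ℓ hf
  let e := (Module.finBasis ℝ E).equivFunL
  rw [intervalIntegrable_iff]
  refine (ContinuousLinearEquiv.integrable_comp_iff e).1 <| Integrable.of_eval fun i => ?_
  exact (hdual ((ContinuousLinearMap.proj i).comp e.toContinuousLinearMap)).def'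

lemma integral_deriv_eq_sub_of_absolutelyContinuousOnInterval
    (hf : AbsolutelyContinuousOnInterval f a b) : ∫ x in a..b, deriv f x = f b - f a := by
  refine (SeparatingDual.eq_iff_forall_dual_eq (R := ℝ)).2 fun ℓ => ?_
  calc ℓ (∫ x in a..b, deriv f x) = ∫ x in a..b, ℓ (deriv f x) :=
        (ℓ.intervalIntegral_comp_comm
          (intervalIntegrable_deriv_of_absolutelyContinuousOnInterval hf)).symm
    _ = ∫ x in a..b, deriv (ℓ ∘ f) x := (intervalIntegral.integral_congr_ae <|
        ae_deriv_clm_comp_eq_of_absolutelyContinuousOnInterval ℓ hf).symm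
    _ = (ℓ ∘ f) b - (ℓ ∘ f) a :=
        (absolutelyContinuousOnInterval_comp_of_lipschitzWith ℓ.lipschitz hf).integral_deriv_eq_sub
    _ = ℓ (f b - f a) := (map_sub ℓ _ _).symm

end AbsolutelyContinuous

section StepFunction

variable {ι α E G M : Type*}

/-- The step function `∑ i ∈ s, v i 1_{[a i, b i)}`. The intervals may overlap, so that a finite
family of disjoint intervals and a partition are treated alike. -/
noncomputable def stepFunction [Preorder α] [AddCommMonoid E] (s : Finset ι) (a b : ι → α)
    (v : ι → E) (r : α) : E :=
  ∑ i ∈ s, (Ico (a i) (b i)).indicator (fun _ => v i) r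

lemma exists_strictMonoOn_image_Iic_eq_coe [LinearOrder α] {S : Finset α} (hS : S.Nonempty) :
    ∃ (k : ℕ) (τ : ℕ → α), StrictMonoOn τ (Iic k) ∧ τ '' Iic k = S := by
  have : NeZero S.card := ⟨hS.card_ne_zero⟩
  have hcard : 0 < S.card := hS.card_pos
  refine ⟨S.card - 1, fun j => S.orderEmbOfFin rfl (Fin.ofNat S.card j), ?_, ?_⟩
  · intro i hi j hj hij
    rw [mem_Iic] at hi hj
    rw [OrderEmbedding.lt_iff_lt, Fin.lt_def, Fin.val_ofNat, Fin.val_ofNat,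
      Nat.mod_eq_of_lt (by lia), Nat.mod_eq_of_lt (by lia)]
    exact hij
  · rw [← Finset.range_orderEmbOfFin S rfl]
    refine Subset.antisymm (by rintro _ ⟨j, -, rfl⟩; exact mem_range_self _) ?_
    rintro _ ⟨p, rfl⟩
    exact ⟨p, mem_Iic.2 (by lia), by simp⟩

lemma sum_range_ite_mem_Ico_sub [LinearOrder α] [AddCommGroup M] {k : ℕ} {τ : ℕ → α}
    (hτ : StrictMonoOn τ (Iic k)) {a b : α} (ha : a ∈ τ '' Iic k) (hb : b ∈ τ '' Iic k)
    (hab : a ≤ b) (g : α → M) :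
    (∑ j ∈ Finset.range k, if τ j ∈ Ico a b then g (τ (j + 1)) - g (τ j) else 0) = g b - g a := by
  obtain ⟨p, hp, rfl⟩ := ha
  obtain ⟨q, hq, rfl⟩ := hb
  have hpq : p ≤ q := (hτ.le_iff_le hp hq).1 hab
  have hfilter : {j ∈ Finset.range k | τ j ∈ Ico (τ p) (τ q)} = Finset.Ico p q := by
    ext j
    rw [Finset.mem_filter, Finset.mem_range, Finset.mem_Ico]
    constructor
    · rintro ⟨hjk, hpj, hjq⟩
      exact ⟨(hτ.le_iff_le hp hjk.le).1 hpj, (hτ.lt_iff_lt hjk.le hq).1 hjq⟩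
    · rintro ⟨hpj, hjq⟩
      have hjk : j < k := hjq.trans_le hq
      exact ⟨hjk, (hτ.le_iff_le hp hjk.le).2 hpj, (hτ.lt_iff_lt hjk.le hq).2 hjq⟩
  rw [← Finset.sum_filter, hfilter, Finset.sum_Ico_sub (fun j => g (τ j)) hpq]

section Refinement

variable [LinearOrder α] [AddCommGroup E] [Module ℝ E] {k : ℕ} {τ : ℕ → α} {s : Finset ι}
  {a b : ι → α}

lemma sum_bilin_stepFunction_sub [AddCommGroup G] [Module ℝ G] [AddCommGroup M] [Module ℝ M]
    (B : E →ₗ[ℝ] G →ₗ[ℝ] M) (hτ : StrictMonoOn τ (Iic k)) (ha : ∀ i ∈ s, a i ∈ τ '' Iic k)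
    (hb : ∀ i ∈ s, b i ∈ τ '' Iic k) (hab : ∀ i ∈ s, a i ≤ b i) (v : ι → E) (g : α → G) :
    ∑ j ∈ Finset.range k, B (stepFunction s a b v (τ j)) (g (τ (j + 1)) - g (τ j)) =
      ∑ i ∈ s, B (v i) (g (b i) - g (a i)) := by
  simp only [stepFunction, map_sum, LinearMap.sum_apply]
  rw [Finset.sum_comm]
  refine Finset.sum_congr rfl fun i hi => ?_
  rw [map_sub, ← sum_range_ite_mem_Ico_sub hτ (ha i hi) (hb i hi) (hab i hi) fun x => B (v i) (g x)]
  refine Finset.sum_congr rfl fun j _ => ?_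
  by_cases hj : τ j ∈ Ico (a i) (b i)
  · rw [indicator_of_mem hj, if_pos hj, map_sub]
  · rw [indicator_of_notMem hj, if_neg hj, map_zero, LinearMap.zero_apply]

lemma stepFunction_apply_eq_sum_smul (hab : ∀ i ∈ s, a i ≤ b i) (v : ι → E) (r : α) :
    stepFunction s a b v r =
      ∑ i ∈ s, ((Ioi r).indicator (1 : α → ℝ) (b i) - (Ioi r).indicator 1 (a i)) • v i := by
  refine Finset.sum_congr rfl fun i hi => ?_
  have := hab i hi
  simp only [indicator_apply, mem_Ioi, mem_Ico, Pi.one_apply]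
  split_ifs <;> first | grind | simp

lemma stepFunction_refine (hτ : StrictMonoOn τ (Iic k)) (ha : ∀ i ∈ s, a i ∈ τ '' Iic k)
    (hb : ∀ i ∈ s, b i ∈ τ '' Iic k) (hab : ∀ i ∈ s, a i ≤ b i) (v : ι → E) :
    stepFunction (Finset.range k) τ (fun j => τ (j + 1)) (fun j => stepFunction s a b v (τ j)) =
      stepFunction s a b v := by
  -- Evaluation at `r` is an elementary integral too: it integrates against the path `1_{(r, ∞)}`.
  ext r
  rw [stepFunction_apply_eq_sum_smul hab, stepFunction_apply_eq_sum_smul fun j hj =>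
    (hτ (Finset.mem_range.1 hj).le (Finset.mem_range.1 hj) j.lt_succ_self).le]
  exact sum_bilin_stepFunction_sub (LinearMap.lsmul ℝ E).flip hτ ha hb hab v
    ((Ioi r).indicator 1)

end Refinement

lemma norm_stepFunction_le_indicator [Preorder α] [SeminormedAddCommGroup E] {s : Finset ι}
    {a b : ι → α} {v : ι → E} (hdisj : (s : Set ι).PairwiseDisjoint fun i => Ico (a i) (b i))
    (hv : ∀ i ∈ s, ‖v i‖ ≤ 1) (r : α) :
    ‖stepFunction s a b v r‖ ≤ (⋃ i ∈ s, Ico (a i) (b i)).indicator 1 r := by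
  rw [Finset.indicator_biUnion_apply s _ hdisj]
  refine norm_sum_le_of_le s fun i hi => ?_
  rw [norm_indicator_eq_indicator_norm]
  exact indicator_le_indicator (hv i hi)

end StepFunction

section VariationalBound

variable {E : Type*} [NormedAddCommGroup E] [InnerProductSpace ℝ E]
  {X F L : ℝ → E} {ρ : ℝ → ℝ} {C T : ℝ}

/-- The right-hand side `∫₀ᵀ L·F + C (∫₀ᵀ |L|² ρ)^{1/2}` of the variational estimate; the constant
`√(2K)` of the paper is `C`. -/
noncomputable def variationalBound (F : ℝ → E) (ρ : ℝ → ℝ) (C T : ℝ) (L : ℝ → E) : ℝ :=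
  (∫ s in Icc 0 T, ⟪L s, F s⟫) + C * √(∫ s in Icc 0 T, ‖L s‖ ^ 2 * ρ s)

/-- The variational estimate up to time `T`: for every step function on a partition starting at `0`,
the elementary integral against `X` stopped at `T` is at most the value of `variationalBound`. The
partition has points `τ 0, …, τ k`, and the values of `τ` after `k` are irrelevant. -/
def HasVariationalBound (X F : ℝ → E) (ρ : ℝ → ℝ) (C T : ℝ) : Prop :=
  ∀ (k : ℕ) (τ : ℕ → ℝ), τ 0 = 0 → (∀ j < k, τ j < τ (j + 1)) → ∀ Λ : ℕ → E,
    ∑ j ∈ Finset.range k, ⟪Λ j, X (min T (τ (j + 1))) - X (min T (τ j))⟫ ≤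
      variationalBound F ρ C T (stepFunction (Finset.range k) τ (fun j => τ (j + 1)) Λ)

lemma HasVariationalBound.sum_inner_sub_le (h : HasVariationalBound X F ρ C T) {ι : Type*}
    {s : Finset ι} {a b : ι → ℝ} (ha : ∀ i ∈ s, 0 ≤ a i) (hab : ∀ i ∈ s, a i ≤ b i)
    (hb : ∀ i ∈ s, b i ≤ T) (v : ι → E) :
    ∑ i ∈ s, ⟪v i, X (b i) - X (a i)⟫ ≤ variationalBound F ρ C T (stepFunction s a b v) := by
  classical
  let S : Finset ℝ := insert 0 (s.image a ∪ s.image b)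
  obtain ⟨k, τ, hτ, hS⟩ := exists_strictMonoOn_image_Iic_eq_coe (S := S) (by simp [S])
  have haτ (i) (hi : i ∈ s) : a i ∈ τ '' Iic k := by
    rw [hS]; simpa [S] using .inr (.inl ⟨i, hi, rfl⟩)
  have hbτ (i) (hi : i ∈ s) : b i ∈ τ '' Iic k := by
    rw [hS]; simpa [S] using .inr (.inr ⟨i, hi, rfl⟩)
  have hτ0 : τ 0 = 0 := by
    obtain ⟨p, hp, hp0⟩ : (0 : ℝ) ∈ τ '' Iic k := by rw [hS]; simp [S]
    have hnonneg : ∀ x ∈ S, 0 ≤ x := by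
      simp only [S, Finset.forall_mem_insert, Finset.forall_mem_union, Finset.forall_mem_image]
      exact ⟨le_rfl, ha, fun i hi => (ha i hi).trans (hab i hi)⟩
    have hmem : τ 0 ∈ (S : Set ℝ) := hS ▸ mem_image_of_mem τ (mem_Iic.2 k.zero_le)
    exact (hp0 ▸ hτ.monotoneOn k.zero_le hp p.zero_le).antisymm (hnonneg _ hmem)
  have key := h k τ hτ0 (fun j hj => hτ hj.le hj j.lt_succ_self) fun j => stepFunction s a b v (τ j)
  rw [stepFunction_refine hτ haτ hbτ hab] at key
  refine Eq.trans_le ?_ key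
  calc ∑ i ∈ s, ⟪v i, X (b i) - X (a i)⟫
      = ∑ i ∈ s, ⟪v i, X (min T (b i)) - X (min T (a i))⟫ := Finset.sum_congr rfl fun i hi => by
        rw [min_eq_right (hb i hi), min_eq_right ((hab i hi).trans (hb i hi))]
    _ = _ := (sum_bilin_stepFunction_sub (innerₗ E) hτ haτ hbτ hab v fun t => X (min T t)).symm

lemma variationalBound_le_of_norm_le_indicator (hC : 0 ≤ C) (hF : IntegrableOn F (Icc 0 T))
    (hρ_nonneg : ∀ s ∈ Icc 0 T, 0 ≤ ρ s) (hρ : IntegrableOn ρ (Icc 0 T)) {U : Set ℝ}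
    (hU : MeasurableSet U) (hL : ∀ r, ‖L r‖ ≤ U.indicator 1 r) :
    variationalBound F ρ C T L ≤
      (∫ r in U, ‖F r‖ ∂volume.restrict (Icc 0 T)) +
        C * √(∫ r in U, ρ r ∂volume.restrict (Icc 0 T)) := by
  rw [← integral_indicator hU, ← integral_indicator hU]
  unfold variationalBound
  gcongr ?_ + C * √?_
  · refine (Real.le_norm_self _).trans (norm_integral_le_of_norm_le (hF.norm.indicator hU) ?_)
    refine .of_forall fun r => (norm_inner_le_norm _ _).trans ?_
    calc ‖L r‖ * ‖F r‖ ≤ U.indicator 1 r * ‖F r‖ := by gcongr; exact hL r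
      _ = U.indicator (fun r => ‖F r‖) r := by by_cases hr : r ∈ U <;> simp [hr]
  · have hsq_le (r : ℝ) : ‖L r‖ ^ 2 ≤ U.indicator 1 r := by
      calc ‖L r‖ ^ 2 ≤ U.indicator 1 r ^ 2 := by gcongr; exact hL r
        _ = U.indicator 1 r := by by_cases hr : r ∈ U <;> simp [hr]
    have hρ_ae : ∀ᵐ r ∂volume.restrict (Icc 0 T), 0 ≤ ρ r :=
      ae_restrict_of_forall_mem measurableSet_Icc hρ_nonneg
    refine integral_mono_of_nonneg ?_ (hρ.indicator hU) ?_
    · filter_upwards [hρ_ae] with r hr using mul_nonneg (sq_nonneg _) hr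
    · filter_upwards [hρ_ae] with r hr
      calc ‖L r‖ ^ 2 * ρ r ≤ U.indicator 1 r * ρ r := by gcongr; exact hsq_le r
        _ = U.indicator ρ r := by by_cases hr : r ∈ U <;> simp [hr]

lemma exists_norm_le_one_inner_eq_norm (w : E) : ∃ v : E, ‖v‖ ≤ 1 ∧ ⟪v, w⟫ = ‖w‖ := by
  rcases eq_or_ne w 0 with rfl | hw
  · exact ⟨0, by simp⟩
  · refine ⟨NormedSpace.normalize w, (NormedSpace.norm_normalize_eq_one_iff.2 hw).le, ?_⟩
    rw [NormedSpace.normalize, real_inner_smul_left, real_inner_self_eq_norm_sq]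
    field_simp

lemma HasVariationalBound.sum_norm_sub_le (h : HasVariationalBound X F ρ C T) (hC : 0 ≤ C)
    (hF : IntegrableOn F (Icc 0 T)) (hρ_nonneg : ∀ s ∈ Icc 0 T, 0 ≤ ρ s)
    (hρ : IntegrableOn ρ (Icc 0 T)) {ι : Type*} {s : Finset ι} {a b : ι → ℝ}
    (ha : ∀ i ∈ s, 0 ≤ a i) (hab : ∀ i ∈ s, a i ≤ b i) (hb : ∀ i ∈ s, b i ≤ T)
    (hdisj : (s : Set ι).PairwiseDisjoint fun i => Ico (a i) (b i)) :
    ∑ i ∈ s, ‖X (b i) - X (a i)‖ ≤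
      (∫ r in ⋃ i ∈ s, Ico (a i) (b i), ‖F r‖ ∂volume.restrict (Icc 0 T)) +
        C * √(∫ r in ⋃ i ∈ s, Ico (a i) (b i), ρ r ∂volume.restrict (Icc 0 T)) := by
  choose v hv hvX using fun i => exists_norm_le_one_inner_eq_norm (X (b i) - X (a i))
  calc ∑ i ∈ s, ‖X (b i) - X (a i)‖ = ∑ i ∈ s, ⟪v i, X (b i) - X (a i)⟫ := by simp only [hvX]
    _ ≤ variationalBound F ρ C T (stepFunction s a b v) := h.sum_inner_sub_le ha hab hb v
    _ ≤ _ := variationalBound_le_of_norm_le_indicator hC hF hρ_nonneg hρ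
      (s.measurableSet_biUnion fun _ _ => measurableSet_Ico)
      (norm_stepFunction_le_indicator hdisj fun i _ => hv i)

lemma HasVariationalBound.sum_dist_le (h : HasVariationalBound X F ρ C T) (hC : 0 ≤ C)
    (hT : 0 ≤ T) (hF : IntegrableOn F (Icc 0 T)) (hρ_nonneg : ∀ s ∈ Icc 0 T, 0 ≤ ρ s)
    (hρ : IntegrableOn ρ (Icc 0 T)) {m : ℕ} {I : ℕ → ℝ × ℝ}
    (hI : (m, I) ∈ AbsolutelyContinuousOnInterval.disjWithin 0 T) :
    ∑ i ∈ Finset.range m, dist (X (I i).1) (X (I i).2) ≤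
      (∫ r in ⋃ i ∈ Finset.range m, uIoc (I i).1 (I i).2, ‖F r‖ ∂volume.restrict (uIoc 0 T)) +
        C * √(∫ r in ⋃ i ∈ Finset.range m, uIoc (I i).1 (I i).2, ρ r
          ∂volume.restrict (uIoc 0 T)) := by
  obtain ⟨hmem, hdisj⟩ := hI
  simp only [uIcc_of_le hT] at hmem
  have hdist (x y : ℝ) : dist (X x) (X y) = ‖X (max x y) - X (min x y)‖ := by
    rw [← dist_eq_norm]
    rcases le_total x y with hxy | hxy
    · rw [max_eq_right hxy, min_eq_left hxy, dist_comm]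
    · rw [max_eq_left hxy, min_eq_right hxy]
  have hrestrict : volume.restrict (uIoc 0 T) = volume.restrict (Icc 0 T) := by
    rw [uIoc_of_le hT, restrict_Ioc_eq_restrict_Icc]
  have hU : (⋃ i ∈ Finset.range m, uIoc (I i).1 (I i).2) =ᵐ[volume.restrict (Icc 0 T)]
      ⋃ i ∈ Finset.range m, Ico (min (I i).1 (I i).2) (max (I i).1 (I i).2) :=
    (Filter.EventuallyEq.countable_bUnion (Finset.countable_toSet _)
      fun _ _ => Ico_ae_eq_Ioc).symm
  simp only [hdist]
  rw [hrestrict, setIntegral_congr_set hU, setIntegral_congr_set hU]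
  refine h.sum_norm_sub_le hC hF hρ_nonneg hρ (fun i hi => le_min (hmem i hi).1.1 (hmem i hi).2.1)
    (fun i _ => min_le_max) (fun i hi => max_le (hmem i hi).1.2 (hmem i hi).2.2)
    fun i hi j hj hij => ?_
  simpa only [Function.onFun, uIoc, Ico_disjoint_Ico, Ioc_disjoint_Ioc] using hdisj hi hj hij

theorem HasVariationalBound.absolutelyContinuousOnInterval (h : HasVariationalBound X F ρ C T)
    (hC : 0 ≤ C) (hT : 0 ≤ T) (hF : IntegrableOn F (Icc 0 T))
    (hρ_nonneg : ∀ s ∈ Icc 0 T, 0 ≤ ρ s) (hρ : IntegrableOn ρ (Icc 0 T)) :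
    AbsolutelyContinuousOnInterval X 0 T := by
  have hsub : uIoc 0 T ⊆ Icc 0 T := uIoc_of_le hT ▸ Ioc_subset_Icc_self
  have hlim := (tendsto_setIntegral_biUnion_uIoc_nhds_zero (hF.mono_set hsub).norm).add
    ((tendsto_setIntegral_biUnion_uIoc_nhds_zero (hρ.mono_set hsub)).sqrt.const_mul C)
  simp only [Real.sqrt_zero, mul_zero, add_zero] at hlim
  refine squeeze_zero' (.of_forall fun _ => Finset.sum_nonneg fun _ _ => dist_nonneg) ?_ hlim
  filter_upwards [mem_inf_of_right (mem_principal_self _)] with ⟨m, I⟩ hI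
  exact h.sum_dist_le hC hT hF hρ_nonneg hρ hI

end VariationalBound

theorem abs_continuous_of_variational_bound_general {E : Type*} [NormedAddCommGroup E]
    [InnerProductSpace ℝ E] [FiniteDimensional ℝ E] {X F : ℝ → E} {ρ : ℝ → ℝ} {C : ℝ} (hC : 0 ≤ C)
    (hF : LocallyIntegrableOn F (Ici 0)) (hρ_nonneg : ∀ s, 0 ≤ s → 0 ≤ ρ s)
    (hρ : LocallyIntegrableOn ρ (Ici 0)) (h : ∀ T, 0 < T → HasVariationalBound X F ρ C T) :
    (∀ T, IntegrableOn (deriv X) (Icc 0 T)) ∧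
      ∀ t, 0 ≤ t → X t = X 0 + ∫ s in Icc 0 t, deriv X s := by
  have hac_of_pos (T : ℝ) (hT : 0 < T) : AbsolutelyContinuousOnInterval X 0 T :=
    (h T hT).absolutelyContinuousOnInterval hC hT.le
      (hF.integrableOn_compact_subset Icc_subset_Ici_self isCompact_Icc)
      (fun s hs => hρ_nonneg s hs.1)
      (hρ.integrableOn_compact_subset Icc_subset_Ici_self isCompact_Icc)
  have hac (T : ℝ) (hT : 0 ≤ T) : AbsolutelyContinuousOnInterval X 0 T :=
    (hac_of_pos (T + 1) (by positivity)).mono <| uIcc_subset_uIcc_left <| by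
      rw [uIcc_of_le (by positivity)]
      exact ⟨hT, le_add_of_nonneg_right zero_le_one⟩
  have hint (T : ℝ) (hT : 0 ≤ T) : IntegrableOn (deriv X) (Icc 0 T) :=
    (intervalIntegrable_iff_integrableOn_Icc_of_le hT).1 <|
      intervalIntegrable_deriv_of_absolutelyContinuousOnInterval (hac T hT)
  refine ⟨fun T => (hint |T| (abs_nonneg T)).mono_set (Icc_subset_Icc_right (le_abs_self T)),
    fun t ht => ?_⟩
  rw [integral_Icc_eq_integral_Ioc, ← intervalIntegral.integral_of_le ht,
    integral_deriv_eq_sub_of_absolutelyContinuousOnInterval (hac t ht), add_sub_cancel]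

/-- Lemma (part of `le:differ` of the paper): a continuous path `X` satisfying the
variational estimate against all piecewise-constant integrands is absolutely continuous
w.r.t. Lebesgue measure on compact intervals, i.e. it is the integral of a locally
integrable derivative. -/
theorem abs_continuous_of_variational_bound
    (n : ℕ) (X : ℝ → EuclideanSpace ℝ (Fin n)) (hX : Continuous X)
    (K : ℝ) (hK : 0 ≤ K)
    (F : ℝ → EuclideanSpace ℝ (Fin n)) (hF : LocallyIntegrable F volume)
    (ρ : ℝ → ℝ) (hρ_nonneg : ∀ s, 0 ≤ ρ s) (hρ : LocallyIntegrable ρ volume)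
    (hineq : ∀ t : ℝ, 0 < t → ∀ k : ℕ, ∀ τ : ℕ → ℝ, τ 0 = 0 →
      (∀ j < k, τ j < τ (j + 1)) →
      ∀ Λ : ℕ → EuclideanSpace ℝ (Fin n),
        (∑ j ∈ Finset.range k, ⟪Λ j, X (min t (τ (j + 1))) - X (min t (τ j))⟫) ≤
          (∫ s in Set.Icc (0 : ℝ) t,
            ⟪(∑ j ∈ Finset.range k,
              Set.indicator (Set.Ico (τ j) (τ (j + 1))) (fun _ => Λ j) s), F s⟫) +
          Real.sqrt (2 * K) *
            Real.sqrt (∫ s in Set.Icc (0 : ℝ) t,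
              ‖∑ j ∈ Finset.range k,
                Set.indicator (Set.Ico (τ j) (τ (j + 1))) (fun _ => Λ j) s‖ ^ 2 * ρ s)) :
    ∃ D : ℝ → EuclideanSpace ℝ (Fin n),
      (∀ T : ℝ, IntegrableOn D (Set.Icc 0 T) volume) ∧
      ∀ t : ℝ, 0 ≤ t → X t = X 0 + ∫ s in Set.Icc (0 : ℝ) t, D s :=
  ⟨deriv X, abs_continuous_of_variational_bound_general (Real.sqrt_nonneg (2 * K))
    (hF.locallyIntegrableOn _) (fun s _ => hρ_nonneg s) (hρ.locallyIntegrableOn _) hineq⟩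
end
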